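/- arXiv:2509.04200 — 7 statements merged into one kernel-verified Lean document; each statement's English description precedes it below -/
import Mathlib

section
/- Let X be an infinite set, κ a cardinal with 2 ≤ κ ≤ |X|, 𝒫_κ a κ-uniform partition of X, and M an inverse subsemigroup of I_X. If every orbit of M has cardinality at most κ, then M ≼ PStab(𝒫_κ). -/
open Set Cardinal

universe u

/-- A chart on `X` (an element of the symmetric inverse monoid `I_X`): a partial
bijection between subsets of `X`, encoded as a functional, injective relation,
i.e. a set of pairs. -/
structure Chart (X : Type u) : Type u where
  rel : Set (X × X)
  functional : ∀ ⦃x y y'⦄, (x, y) ∈ rel → (x, y') ∈ rel → y = y'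
  injective : ∀ ⦃x x' y⦄, (x, y) ∈ rel → (x', y) ∈ rel → x = x'

namespace Chart

variable {X : Type u}

/-- Composition of charts: compose wherever possible. -/
instance : Mul (Chart X) :=
  ⟨fun f g =>
    { rel := {p | ∃ y, (p.1, y) ∈ f.rel ∧ (y, p.2) ∈ g.rel}
      functional := by
        rintro x y y' ⟨z, hz1, hz2⟩ ⟨w, hw1, hw2⟩
        obtain rfl : z = w := f.functional hz1 hw1
        exact g.functional hz2 hw2
      injective := by
        rintro x x' y ⟨z, hz1, hz2⟩ ⟨w, hw1, hw2⟩
        obtain rfl : z = w := g.injective hz2 hw2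
        exact f.injective hz1 hw1 }⟩

/-- The inverse chart. -/
instance : Inv (Chart X) :=
  ⟨fun f =>
    { rel := {p | (p.2, p.1) ∈ f.rel}
      functional := fun _ _ _ h h' => f.injective h h'
      injective := fun _ _ _ h h' => f.functional h h' }⟩

/-- The domain of a chart. -/
def dom (f : Chart X) : Set X := {x | ∃ y, (x, y) ∈ f.rel}

/-- The range (image) of a chart. -/
def ran (f : Chart X) : Set X := {y | ∃ x, (x, y) ∈ f.rel}

end Chart

/-- Membership in the subsemigroup of `I_X` generated by a set of charts. -/
inductive InGen {X : Type u} (S : Set (Chart X)) : Chart X → Prop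
  | base {f : Chart X} : f ∈ S → InGen S f
  | mul {f g : Chart X} : InGen S f → InGen S g → InGen S (f * g)

/-- The subsemigroup of `I_X` generated by a set of charts. -/
def Sgen {X : Type u} (S : Set (Chart X)) : Set (Chart X) := {f | InGen S f}

/-- The Bergman–Shelah preorder `S ≼ T` on subsets of `I_X`: there is a countable
subset `U ⊆ I_X` with `S` contained in the subsemigroup generated by `T ∪ U`. -/
def BSleq {X : Type u} (S T : Set (Chart X)) : Prop :=
  ∃ U : Set (Chart X), U.Countable ∧ S ⊆ Sgen (T ∪ U)

/-- Bergman–Shelah equivalence `S ≈ T`. -/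
def BSequiv {X : Type u} (S T : Set (Chart X)) : Prop := BSleq S T ∧ BSleq T S

/-- The Bergman–Shelah preorder relative to a cardinal `κ`: `S ≼_κ T` iff there is
`U ⊆ I_X` with `|U| < κ` and `S` contained in the subsemigroup generated by `T ∪ U`. -/
def BSleqC {X : Type u} (κ : Cardinal.{u}) (S T : Set (Chart X)) : Prop :=
  ∃ U : Set (Chart X), #↥U < κ ∧ S ⊆ Sgen (T ∪ U)

/-- Bergman–Shelah equivalence relative to a cardinal `κ`. -/
def BSequivC {X : Type u} (κ : Cardinal.{u}) (S T : Set (Chart X)) : Prop :=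
  BSleqC κ S T ∧ BSleqC κ T S

/-- A chart is a permutation of `X` if it is everywhere defined and surjective. -/
def IsPermChart {X : Type u} (f : Chart X) : Prop :=
  (∀ x : X, ∃ y, (x, y) ∈ f.rel) ∧ ∀ y : X, ∃ x, (x, y) ∈ f.rel

/-- The partwise stabiliser of a family of subsets of `X`: all permutations of `X`
mapping each member of the family onto itself. -/
def PStab {X : Type u} (P : Set (Set X)) : Set (Chart X) :=
  {f | IsPermChart f ∧ ∀ B ∈ P, {y | ∃ x ∈ B, (x, y) ∈ f.rel} = B}

/-- A subset of `I_X` closed under composition. -/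
def IsSubsemigroup {X : Type u} (S : Set (Chart X)) : Prop :=
  ∀ f ∈ S, ∀ g ∈ S, f * g ∈ S

/-- A subsemigroup of `I_X` closed under inversion. -/
def IsInverseSubsemigroup {X : Type u} (S : Set (Chart X)) : Prop :=
  IsSubsemigroup S ∧ ∀ f ∈ S, f⁻¹ ∈ S

/-- The orbit of a point under a set of charts: `{x} ∪ {xf : f ∈ M, x ∈ dom f}`. -/
def ChartOrbit {X : Type u} (M : Set (Chart X)) (x : X) : Set X :=
  insert x {y | ∃ f ∈ M, (x, y) ∈ f.rel}

/-- The cone of a point under a set of charts: `{xs : s ∈ S, x ∈ dom s}`. -/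
def ChartCone {X : Type u} (S : Set (Chart X)) (x : X) : Set X :=
  {y | ∃ f ∈ S, (x, y) ∈ f.rel}

/-- The semilattice of idempotents of `I_X`: the partial identity charts. -/
def EX (X : Type u) : Set (Chart X) := {f | ∀ x y : X, (x, y) ∈ f.rel → y = x}

/-- A `κ`-uniform partition: every part has cardinality `κ`. -/
def IsUniformPartition {X : Type u} (κ : Cardinal.{u}) (P : Set (Set X)) : Prop :=
  Setoid.IsPartition P ∧ ∀ B ∈ P, #↥B = κ

/-- A `κ`-unbounded partition: all parts have cardinality `< κ` but no cardinal
`c < κ` bounds the cardinalities of all parts. -/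
def IsUnboundedPartition {X : Type u} (κ : Cardinal.{u}) (P : Set (Set X)) : Prop :=
  Setoid.IsPartition P ∧ (∀ B ∈ P, #↥B < κ) ∧ ¬∃ c < κ, ∀ B ∈ P, #↥B ≤ c

/-- A `κ`-bounded partition: some cardinal `c < κ` bounds the cardinalities of
all parts. -/
def IsBoundedPartition {X : Type u} (κ : Cardinal.{u}) (P : Set (Set X)) : Prop :=
  Setoid.IsPartition P ∧ ∃ c < κ, ∀ B ∈ P, #↥B ≤ c

/-- A rooted tree on (a subset of) `X`, encoded via its parent function: every
vertex reaches the root by finitely many applications of `par`. -/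
structure RTree (X : Type u) : Type u where
  verts : Set X
  root : X
  root_mem : root ∈ verts
  par : X → X
  par_mem : ∀ x ∈ verts, par x ∈ verts
  par_root : par root = root
  par_reaches : ∀ x ∈ verts, ∃ n : ℕ, par^[n] x = root

namespace RTree

variable {X : Type u}

/-- `T.anc x y` : `x` is an ancestor of `y` (or `x = y`), i.e. `x` lies on the
rooted path to `y`. -/
def anc (T : RTree X) (x y : X) : Prop := ∃ n : ℕ, T.par^[n] y = x

/-- The level of a vertex: its distance to the root. -/
noncomputable def level (T : RTree X) (x : X) : ℕ := sInf {n : ℕ | T.par^[n] x = T.root}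

/-- The children of a vertex. -/
def children (T : RTree X) (x : X) : Set X :=
  {y | y ∈ T.verts ∧ T.par y = x ∧ y ≠ x}

/-- The neighbours of a vertex in the tree (its children together with its
parent, if the vertex is not the root); the degree of the vertex is the size
of this set. -/
def nbhd (T : RTree X) (x : X) : Set X :=
  {y | y ∈ T.verts ∧ ((T.par y = x ∧ y ≠ x) ∨ (T.par x = y ∧ x ≠ y))}

/-- `P` is the vertex set of a (finite or infinite) path of `T` starting at the
root: a nonempty set of vertices closed under taking parents and linearly
ordered by ancestry. -/
def IsRootedPath (T : RTree X) (P : Set X) : Prop :=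
  P.Nonempty ∧ P ⊆ T.verts ∧ (∀ x ∈ P, T.par x ∈ P) ∧
    ∀ x ∈ P, ∀ y ∈ P, T.anc x y ∨ T.anc y x

end RTree

/-- `T'` is a subtree of `T`: a rooted tree on a subset of the vertices of `T`,
with the same root and the same parent relation. -/
def IsSubtree {X : Type u} (T' T : RTree X) : Prop :=
  T'.verts ⊆ T.verts ∧ T'.root = T.root ∧ ∀ x ∈ T'.verts, T'.par x = T.par x

/-- `Q` is a quasi-subtree of `T`: a rooted tree on a subset of the vertices of
`T` preserving the ancestry relation and the levels of `T`. -/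
def IsQuasiSubtree {X : Type u} (Q T : RTree X) : Prop :=
  Q.verts ⊆ T.verts ∧
    (∀ x ∈ Q.verts, ∀ y ∈ Q.verts, (Q.anc x y ↔ T.anc x y)) ∧
    ∀ x ∈ Q.verts, ∀ y ∈ Q.verts, (Q.level x = Q.level y ↔ T.level x = T.level y)

/-- Isomorphism of rooted trees: a bijection of the vertex sets mapping root to
root and commuting with the parent functions. -/
def RTreeIso {X : Type u} {Y : Type u} (T : RTree X) (R : RTree Y) : Prop :=
  ∃ φ : X → Y, Set.BijOn φ T.verts R.verts ∧ φ T.root = R.root ∧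
    ∀ x ∈ T.verts, φ (T.par x) = R.par (φ x)

/-- The semigroup `𝒮(T)` of path-bijections of a rooted tree `T`: charts whose
domain and range are vertex sets of rooted paths and which preserve levels. -/
def pathSg {X : Type u} (T : RTree X) : Set (Chart X) :=
  {f | (∃ P, T.IsRootedPath P ∧ Chart.dom f = P) ∧
    (∃ Q, T.IsRootedPath Q ∧ Chart.ran f = Q) ∧
    ∀ x y : X, (x, y) ∈ f.rel → T.level y = T.level x}

namespace Chart

/-- The chart of an injective map. -/
def ofInj {X : Type u} (i : X → X) (hi : Function.Injective i) : Chart X where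
  rel := {p | i p.1 = p.2}
  functional := fun _ _ _ h h' => h.symm.trans h'
  injective := fun _ _ _ h h' => hi (Eq.trans h (Eq.symm h'))

theorem ext' {X : Type u} {f g : Chart X} (h : ∀ x y, (x, y) ∈ f.rel ↔ (x, y) ∈ g.rel) :
    f = g := by
  cases f; cases g
  congr 1
  ext ⟨x, y⟩
  exact h x y

theorem mem_mul {X : Type u} {f g : Chart X} {x y : X} :
    (x, y) ∈ (f * g).rel ↔ ∃ z, (x, z) ∈ f.rel ∧ (z, y) ∈ g.rel := Iff.rfl

theorem mem_inv {X : Type u} {f : Chart X} {x y : X} :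
    (x, y) ∈ (f⁻¹).rel ↔ (y, x) ∈ f.rel := Iff.rfl

theorem mem_ofInj {X : Type u} {i : X → X} {hi : Function.Injective i} {x y : X} :
    (x, y) ∈ (ofInj i hi).rel ↔ i x = y := Iff.rfl

open Classical in
/-- The forward map of the unitary-dilation style permutation of `X × Bool`. -/
noncomputable def dil {X : Type u} (f : Chart X) : X × Bool → X × Bool
  | (x, false) => if h : ∃ y, (x, y) ∈ f.rel then (h.choose, false) else (x, true)
  | (x, true) => if h : ∃ y, (y, x) ∈ f.rel then (h.choose, true) else (x, false)

theorem dil_false {X : Type u} {f : Chart X} {x y : X} (h : (x, y) ∈ f.rel) :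
    dil f (x, false) = (y, false) := by
  have h' : ∃ y, (x, y) ∈ f.rel := ⟨y, h⟩
  simp only [dil, dif_pos h']
  rw [f.functional h'.choose_spec h]

theorem dil_true {X : Type u} {f : Chart X} {x y : X} (h : (y, x) ∈ f.rel) :
    dil f (x, true) = (y, true) := by
  have h' : ∃ y, (y, x) ∈ f.rel := ⟨y, h⟩
  simp only [dil, dif_pos h']
  rw [f.injective h'.choose_spec h]

theorem dil_false' {X : Type u} {f : Chart X} {x : X} (h : ¬ ∃ y, (x, y) ∈ f.rel) :
    dil f (x, false) = (x, true) := by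
  simp only [dil, dif_neg h]

theorem dil_true' {X : Type u} {f : Chart X} {x : X} (h : ¬ ∃ y, (y, x) ∈ f.rel) :
    dil f (x, true) = (x, false) := by
  simp only [dil, dif_neg h]

theorem dil_inv {X : Type u} (f : Chart X) (z : X × Bool) : dil f⁻¹ (dil f z) = z := by
  obtain ⟨x, b⟩ := z
  cases b
  · by_cases h : ∃ y, (x, y) ∈ f.rel
    · obtain ⟨y, h⟩ := h
      rw [dil_false h, dil_false (mem_inv.2 h)]
    · rw [dil_false' h, dil_true' h]
  · by_cases h : ∃ y, (y, x) ∈ f.rel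
    · obtain ⟨y, h⟩ := h
      rw [dil_true h, dil_true (mem_inv.2 h)]
    · rw [dil_true' h, dil_false' h]

/-- The dilation as a permutation. -/
noncomputable def dilPerm {X : Type u} (f : Chart X) : Equiv.Perm (X × Bool) where
  toFun := dil f
  invFun := dil f⁻¹
  left_inv := dil_inv f
  right_inv := dil_inv f⁻¹

theorem dil_iff {X : Type u} (f : Chart X) (x y : X) :
    dil f (x, false) = (y, false) ↔ (x, y) ∈ f.rel := by
  refine ⟨fun h => ?_, dil_false⟩
  by_cases h' : ∃ y, (x, y) ∈ f.rel
  · obtain ⟨z, hz⟩ := h'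
    rw [dil_false hz] at h
    simp at h
    exact h ▸ hz
  · rw [dil_false' h'] at h
    simp at h

theorem dil_compat {X : Type u} {Q : Type u} (f : Chart X) (q : X → Q)
    (hf : ∀ x y, (x, y) ∈ f.rel → q x = q y) (z : X × Bool) : q (dil f z).1 = q z.1 := by
  obtain ⟨x, b⟩ := z
  cases b
  · by_cases h : ∃ y, (x, y) ∈ f.rel
    · obtain ⟨y, h⟩ := h
      rw [dil_false h]; exact (hf _ _ h).symm
    · rw [dil_false' h]
  · by_cases h : ∃ y, (y, x) ∈ f.rel
    · obtain ⟨y, h⟩ := h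
      rw [dil_true h]; exact hf _ _ h
    · rw [dil_true' h]

end Chart

open Chart

theorem sgen_core {X : Type u} {P : Set (Set X)} (p : X → ↥P)
    (hp : ∀ x, ∀ B : ↥P, x ∈ B.1 ↔ p x = B)
    {Y : Type u} (φ : Y ↪ X) (j : X ↪ Y) (σ : Equiv.Perm Y)
    (hσ : ∀ y, p (φ (σ y)) = p (φ y)) (f : Chart X)
    (hf : ∀ x y, (x, y) ∈ f.rel ↔ σ (j x) = j y) :
    InGen (PStab P ∪ {ofInj _ (j.trans φ).injective, (ofInj _ (j.trans φ).injective)⁻¹}) f := by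
  set g : Equiv.Perm X := σ.viaEmbedding φ with hg
  have hg1 : ∀ y, g (φ y) = φ (σ y) := fun y => Equiv.Perm.viaEmbedding_apply σ φ y
  have hg2 : ∀ x, p (g x) = p x := by
    intro x
    by_cases hx : x ∈ Set.range φ
    · obtain ⟨y, rfl⟩ := hx
      rw [hg1, hσ]
    · rw [hg, Equiv.Perm.viaEmbedding_apply_of_notMem σ φ x hx]
  have hgP : ofInj g g.injective ∈ PStab P := by
    refine ⟨⟨fun x => ⟨g x, rfl⟩, fun y => ⟨g.symm y, mem_ofInj.2 (by simp)⟩⟩, fun B hB => ?_⟩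
    ext y
    constructor
    · rintro ⟨x, hx, hxy⟩
      rw [mem_ofInj] at hxy
      subst hxy
      exact (hp _ ⟨B, hB⟩).2 ((hg2 x).trans ((hp _ ⟨B, hB⟩).1 hx))
    · intro hy
      refine ⟨g.symm y, (hp _ ⟨B, hB⟩).2 ?_, mem_ofInj.2 (by simp)⟩
      rw [← hg2, Equiv.apply_symm_apply]
      exact (hp _ ⟨B, hB⟩).1 hy
  have : f = ofInj _ (j.trans φ).injective * ofInj g g.injective *
      (ofInj _ (j.trans φ).injective)⁻¹ := by
    apply Chart.ext'
    intro x y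
    rw [hf]
    simp only [mem_mul, mem_inv, mem_ofInj, Function.Embedding.trans_apply]
    constructor
    · intro h
      exact ⟨_, ⟨_, rfl, rfl⟩, by rw [hg1, h]⟩
    · rintro ⟨z, ⟨w, rfl, rfl⟩, h⟩
      rw [hg1] at h
      exact (φ.injective h).symm
  rw [this]
  exact .mul (.mul (.base (Or.inr (by simp))) (.base (Or.inl hgP))) (.base (Or.inr (by simp)))

theorem InGen.mono {X : Type u} {S T : Set (Chart X)} (h : S ⊆ T) {f : Chart X}
    (hf : InGen S f) : InGen T f := by
  induction hf with
  | base hf => exact .base (h hf)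
  | mul _ _ h1 h2 => exact .mul h1 h2

theorem exists_emb {X Y Q I : Type u} {κ : Cardinal.{u}} (p : X → I)
    (hp : ∀ b, #{x // p x = b} = κ) (q : Y → Q) (hq : ∀ a, #{y // q y = a} ≤ κ)
    (hQ : #Q ≤ #I) : ∃ φ : Y ↪ X, ∀ y y', q y = q y' → p (φ y) = p (φ y') := by
  obtain ⟨i⟩ := hQ
  have : ∀ a, Nonempty ({y // q y = a} ↪ {x // p x = i a}) := fun a => by
    rw [← Cardinal.le_def, hp]; exact hq a
  have e := fun a => Classical.choice (this a)
  have key : ∀ y, p (e (q y) ⟨y, rfl⟩).1 = i (q y) := fun y => (e (q y) ⟨y, rfl⟩).2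
  have key2 : ∀ a y (h : q y = a), (e (q y) ⟨y, rfl⟩).1 = (e a ⟨y, h⟩).1 := by
    rintro a y rfl; rfl
  refine ⟨⟨fun y => (e (q y) ⟨y, rfl⟩).1, fun y y' h => ?_⟩, fun y y' h => ?_⟩
  · have h1 : q y = q y' := by
      apply i.injective
      exact (key y).symm.trans ((congrArg p h).trans (key y'))
    have h2 : (e (q y) ⟨y, rfl⟩).1 = (e (q y') ⟨y', rfl⟩).1 := h
    rw [key2 _ _ h1] at h2
    have h3 := (e (q y')).injective (Subtype.ext h2)
    exact congrArg Subtype.val h3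
  · show p (e (q y) ⟨y, rfl⟩).1 = p (e (q y') ⟨y', rfl⟩).1
    rw [key, key, h]

theorem exists_perm {X Q : Type u} (q : X → Q) (hq : ∀ a, Finite {y // q y = a})
    (f : Chart X) (hf : ∀ x y, (x, y) ∈ f.rel → q x = q y) :
    ∃ σ : Equiv.Perm X, (∀ x, q (σ x) = q x) ∧ ∀ x y, (x, y) ∈ f.rel → σ x = y := by
  have : ∀ a, ∃ τ : Equiv.Perm {y // q y = a}, ∀ x y, (x.1, y.1) ∈ f.rel → τ x = y := by
    intro a
    have := hq a
    classical
    let A : {y // q y = a} → Prop := fun x => ∃ y, (x.1, y) ∈ f.rel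
    let B : {y // q y = a} → Prop := fun x => ∃ y, (y, x.1) ∈ f.rel
    let F : {x // A x} → {x // B x} := fun x =>
      ⟨⟨x.2.choose, by rw [← hf _ _ x.2.choose_spec]; exact x.1.2⟩, x.1.1, x.2.choose_spec⟩
    have hF : ∀ x, (x.1.1, (F x).1.1) ∈ f.rel := fun x => x.2.choose_spec
    have hb : Function.Bijective F := by
      constructor
      · intro x x' h
        have h1 := hF x
        rw [h] at h1
        exact Subtype.ext (Subtype.ext (f.injective h1 (hF x')))
      · rintro ⟨⟨y, hy⟩, x, hx⟩
        refine ⟨⟨⟨x, (hf _ _ hx).trans hy⟩, y, hx⟩, ?_⟩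
        exact Subtype.ext (Subtype.ext (f.functional (hF _) hx))
    refine ⟨(Equiv.ofBijective F hb).extendSubtype, fun x y h => ?_⟩
    rw [Equiv.extendSubtype_apply_of_mem _ x ⟨_, h⟩]
    exact Subtype.ext (f.functional (hF ⟨x, _, h⟩) h)
  choose τ hτ using this
  refine ⟨(Equiv.sigmaFiberEquiv q).permCongr (Equiv.sigmaCongrRight τ), fun x => ?_,
    fun x y h => ?_⟩
  · exact (τ (q x) ⟨x, rfl⟩).2
  · have := hτ (q x) ⟨x, rfl⟩ ⟨y, (hf _ _ h).symm⟩ h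
    exact congrArg Subtype.val this

/-- Charts preserving `q`, when `X × Bool` embeds. -/
theorem genA {X : Type u} {P : Set (Set X)} (p : X → ↥P)
    (hp : ∀ x, ∀ B : ↥P, x ∈ B.1 ↔ p x = B) {Q : Type u} (q : X → Q)
    (φ : X × Bool ↪ X) (hφ : ∀ y y', q y.1 = q y'.1 → p (φ y) = p (φ y')) :
    ∃ U : Set (Chart X), U.Countable ∧ ∀ f : Chart X,
      (∀ x y, (x, y) ∈ f.rel → q x = q y) → InGen (PStab P ∪ U) f := by
  refine ⟨_, ?_, fun f hf => sgen_core p hp φ ⟨fun x => (x, false), fun a b h => by simpa using h⟩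
    (dilPerm f) (fun y => hφ _ _ (dil_compat f q hf y)) f (fun x y => (dil_iff f x y).symm)⟩
  exact (Set.toFinite _).countable

theorem genB {X : Type u} {P : Set (Set X)} (p : X → ↥P)
    (hp : ∀ x, ∀ B : ↥P, x ∈ B.1 ↔ p x = B) {Q : Type u} (q : X → Q)
    (φ : X ↪ X) (hφ : ∀ y y', q y = q y' → p (φ y) = p (φ y')) :
    ∃ U : Set (Chart X), U.Countable ∧ ∀ σ : Equiv.Perm X,
      (∀ x, q (σ x) = q x) → InGen (PStab P ∪ U) (ofInj σ σ.injective) := by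
  refine ⟨_, ?_, fun σ hf => sgen_core p hp φ (Function.Embedding.refl X)
    σ (fun y => hφ _ _ (hf y)) _ (fun x y => Iff.rfl)⟩
  exact (Set.toFinite _).countable

theorem card_fib_bool {X Q : Type u} (q : X → Q) (a : Q) :
    #{y : X × Bool // q y.1 = a} = #{y : X // q y = a} * 2 := by
  have e : {y : X × Bool // q y.1 = a} ≃ {y : X // q y = a} × Bool :=
    ⟨fun y => (⟨y.1.1, y.2⟩, y.1.2), fun y => ⟨(y.1.1, y.2), y.1.2⟩, fun _ => rfl, fun _ => rfl⟩
  rw [Cardinal.mk_congr e]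
  simp

theorem main_aux {X : Type u} [Infinite X] (κ : Cardinal.{u}) (hκ2 : 2 ≤ κ)
    {P : Set (Set X)} (p : X → ↥P)
    (hp : ∀ x, ∀ B : ↥P, x ∈ B.1 ↔ p x = B) (hc : ∀ b, #{x // p x = b} = κ)
    {Q : Type u} (q : X → Q) (hqs : Function.Surjective q) (hq : ∀ a, #{y // q y = a} ≤ κ) :
    ∃ U : Set (Chart X), U.Countable ∧ ∀ f : Chart X,
      (∀ x y, (x, y) ∈ f.rel → q x = q y) → InGen (PStab P ∪ U) f := by
  have hX : ℵ₀ ≤ #X := Cardinal.aleph0_le_mk X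
  have hmul : #X = #↥P * κ := by
    rw [← Cardinal.mk_congr (Equiv.sigmaFiberEquiv p), Cardinal.mk_sigma]
    simp [hc]
  have hP0 : #↥P ≠ 0 := by
    intro h; rw [h, zero_mul] at hmul; rw [hmul] at hX
    exact absurd hX (not_le.2 Cardinal.aleph0_pos)
  have hQX : #Q ≤ #X := Cardinal.mk_le_of_surjective hqs
  rcases lt_or_ge κ ℵ₀ with hfin | hinf
  · have hPX : #↥P = #X := by
      have : ℵ₀ ≤ #↥P := by
        by_contra h
        exact absurd hX (not_le.2 (hmul ▸ Cardinal.mul_lt_aleph0 (not_le.1 h) hfin))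
      rw [hmul, Cardinal.mul_eq_left this (hfin.le.trans this)]
      intro h; rw [h] at hκ2; simp at hκ2
    obtain ⟨φ, hφ⟩ := exists_emb p hc q hq (hQX.trans hPX.ge)
    obtain ⟨ψ, hψ⟩ := exists_emb (Y := X × Bool) p hc (fun y => y.1)
      (fun a => by rw [card_fib_bool (fun x : X => x) a]; simpa using hκ2) hPX.ge
    obtain ⟨U, hU, hU'⟩ := genA p hp (fun x : X => x) ψ hψ
    obtain ⟨V, hV, hV'⟩ := genB p hp q φ hφ
    refine ⟨U ∪ V, hU.union hV, fun f hf => ?_⟩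
    obtain ⟨σ, hσ, hσf⟩ := exists_perm q
      (fun a => Cardinal.lt_aleph0_iff_finite.1 ((hq a).trans_lt hfin)) f hf
    let e : Chart X := ⟨{z | z.1 = z.2 ∧ ∃ y, (z.1, y) ∈ f.rel},
      fun _ _ _ h h' => h.1.symm.trans h'.1, fun _ _ _ h h' => Eq.trans h.1 (Eq.symm h'.1)⟩
    have he : f = e * ofInj σ σ.injective := by
      apply Chart.ext'
      intro x y
      rw [Chart.mem_mul]
      constructor
      · intro h
        exact ⟨x, ⟨rfl, y, h⟩, hσf _ _ h⟩
      · rintro ⟨z, ⟨h1, w, h2⟩, h3⟩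
        have h1 : x = z := h1
        subst h1
        have h3 : σ x = y := h3
        rw [← h3, hσf _ _ h2]; exact h2
    rw [he]
    refine .mul ((hU' e fun x y h => h.1).mono ?_) ((hV' σ hσ).mono ?_)
    · exact Set.union_subset_union_right _ Set.subset_union_left
    · exact Set.union_subset_union_right _ Set.subset_union_right
  · have h2 : κ * 2 = κ := Cardinal.mul_eq_left hinf (hκ2) (by simp)
    rcases le_total #↥P κ with h | h
    · have hXκ : #X = κ := by rw [hmul, Cardinal.mul_eq_right hinf h hP0]
      obtain ⟨φ, hφ⟩ := exists_emb (Y := X × Bool) p hc (fun _ => PUnit.unit.{u+1})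
        (fun a => (Cardinal.mk_subtype_le _).trans (by
          simp only [Cardinal.mk_prod, Cardinal.lift_uzero, hXκ]; simp [h2]))
        (by simpa using Cardinal.one_le_iff_ne_zero.2 hP0)
      exact genA p hp q φ fun y y' _ => hφ y y' rfl
    · have hPX : #↥P = #X := by
        rw [hmul, Cardinal.mul_eq_left (hinf.trans h) h (by rintro rfl; simp at hκ2)]
      obtain ⟨φ, hφ⟩ := exists_emb (Y := X × Bool) p hc (fun y => q y.1)
        (fun a => by
          rw [card_fib_bool q a, ← h2]; exact mul_le_mul_left (hq a) 2) (hQX.trans hPX.ge)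
      exact genA p hp q φ hφ

/-- If `2 ≤ κ ≤ |X|`, `P` is a κ-uniform partition of the infinite
set `X`, and `M` is an inverse subsemigroup of `I_X` all of whose orbits have
cardinality at most `κ`, then `M ≼ PStab P`. -/
theorem stmt1 {X : Type u} [Infinite X] (κ : Cardinal.{u}) (hκ2 : 2 ≤ κ)
    (hκX : κ ≤ #X) (P : Set (Set X)) (hP : IsUniformPartition κ P)
    (M : Set (Chart X)) (hM : IsInverseSubsemigroup M)
    (horb : ∀ x : X, #↥(ChartOrbit M x) ≤ κ) :
    BSleq M (PStab P) := by
  obtain ⟨hP1, hP2⟩ := hP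
  choose p0 hp0 using fun x => (hP1.2 x)
  have hp0' : ∀ x, p0 x ∈ P ∧ x ∈ p0 x := fun x => (hp0 x).1
  let p : X → ↥P := fun x => ⟨p0 x, (hp0' x).1⟩
  have hp : ∀ x, ∀ B : ↥P, x ∈ B.1 ↔ p x = B := by
    intro x B
    constructor
    · intro h
      exact Subtype.ext ((hp0 x).2 B.1 ⟨B.2, h⟩).symm
    · rintro rfl
      exact (hp0' x).2
  have hc : ∀ b, #{x // p x = b} = κ := by
    intro b
    rw [← hP2 b.1 b.2]
    exact Cardinal.mk_congr (Equiv.subtypeEquivRight fun x => (hp x b).symm)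
  let r : Setoid X :=
    { r := fun x y => y ∈ ChartOrbit M x
      iseqv := by
        refine ⟨fun x => Or.inl rfl, ?_, ?_⟩
        · rintro x y (h | ⟨f, hf, h⟩)
          · exact Or.inl h.symm
          · exact Or.inr ⟨f⁻¹, hM.2 f hf, h⟩
        · rintro x y z (h | ⟨f, hf, h⟩) (h' | ⟨g, hg, h'⟩)
          · exact Or.inl (h'.trans h)
          · exact Or.inr ⟨g, hg, h ▸ h'⟩
          · exact Or.inr ⟨f, hf, h' ▸ h⟩
          · exact Or.inr ⟨f * g, hM.1 f hf g hg, y, h, h'⟩ }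
  have hq : ∀ a, #{y // (Quotient.mk r) y = a} ≤ κ := by
    intro a
    induction a using Quotient.inductionOn with
    | h x =>
      refine le_trans (le_of_eq ?_) (horb x)
      refine Cardinal.mk_congr (Equiv.subtypeEquivRight fun y => ?_)
      rw [eq_comm, Quotient.eq]
      rfl
  obtain ⟨U, hU, hU'⟩ := main_aux κ hκ2 p hp hc (Quotient.mk r) Quotient.mk_surjective hq
  exact ⟨U, hU, fun f hf => hU' f fun x y h => Quotient.sound (Or.inr ⟨f, hf, h⟩)⟩
end

section
/- Let X be an infinite set, n ≥ 2 a natural number, 𝒫_n an n-uniform partition of X, and M an inverse subsemigroup of I_X. If there exists a natural number m such that every orbit of M has cardinality at most m, then M ≼ PStab(𝒫_n). -/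
open Set Cardinal

universe u

theorem Chart.ext_rel {X : Type u} {f g : Chart X}
    (h : ∀ x y, (x, y) ∈ f.rel ↔ (x, y) ∈ g.rel) : f = g := by
  cases f; cases g
  congr 1
  ext ⟨x, y⟩
  exact h x y

theorem Chart.mem_mul_s5 {X : Type u} {f g : Chart X} {x z : X} :
    (x, z) ∈ (f * g).rel ↔ ∃ y, (x, y) ∈ f.rel ∧ (y, z) ∈ g.rel := Iff.rfl

theorem Chart.mem_inv_s5 {X : Type u} {f : Chart X} {x y : X} :
    (x, y) ∈ (f⁻¹).rel ↔ (y, x) ∈ f.rel := Iff.rfl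

theorem Chart.mul_inv' {X : Type u} (f g : Chart X) : (f * g)⁻¹ = g⁻¹ * f⁻¹ := by
  apply Chart.ext_rel
  intro x y
  simp only [Chart.mem_mul_s5, Chart.mem_inv_s5]
  constructor <;> rintro ⟨z, h1, h2⟩ <;> exact ⟨z, h2, h1⟩

/-- A pair of injections with disjoint ranges. -/
structure TwoInj {X : Type u} (a b : X × ℕ → X) : Prop where
  ia : ∀ {v w}, a v = a w → v = w
  ib : ∀ {v w}, b v = b w → v = w
  ab : ∀ v w, a v ≠ b w

section
variable {X : Type u} {a b : X × ℕ → X}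

/-- Swap `a w` and `b w` for `w ∈ A`. -/
def swapChart (h : TwoInj a b) (A : Set (X × ℕ)) : Chart X where
  rel := {p | (∃ w ∈ A, p.1 = a w ∧ p.2 = b w) ∨ (∃ w ∈ A, p.1 = b w ∧ p.2 = a w) ∨
    (p.1 = p.2 ∧ ∀ w ∈ A, p.1 ≠ a w ∧ p.1 ≠ b w)}
  functional := by
    have ia := @h.ia
    have ib := @h.ib
    have ab := h.ab
    simp only [mem_ofPred_eq]
    grind
  injective := by
    have ia := @h.ia
    have ib := @h.ib
    have ab := h.ab
    simp only [mem_ofPred_eq]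
    grind

theorem mem_swap (h : TwoInj a b) (A : Set (X × ℕ)) (x y : X) :
    (x, y) ∈ (swapChart h A).rel ↔ (∃ w ∈ A, x = a w ∧ y = b w) ∨
      (∃ w ∈ A, x = b w ∧ y = a w) ∨ (x = y ∧ ∀ w ∈ A, x ≠ a w ∧ x ≠ b w) := Iff.rfl

theorem swap_symm (h : TwoInj a b) (A : Set (X × ℕ)) {x y : X}
    (hxy : (x, y) ∈ (swapChart h A).rel) : (y, x) ∈ (swapChart h A).rel := by
  rw [mem_swap] at *
  grind

theorem swap_inv (h : TwoInj a b) (A : Set (X × ℕ)) :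
    (swapChart h A)⁻¹ = swapChart h A :=
  Chart.ext_rel fun _ _ => ⟨swap_symm h A, swap_symm h A⟩

theorem swap_mem_PStab (h : TwoInj a b) (A : Set (X × ℕ)) (P : Set (Set X))
    (hP : ∀ w, ∀ B ∈ P, a w ∈ B ↔ b w ∈ B) : swapChart h A ∈ PStab P := by
  have tot : ∀ x, ∃ y, (x, y) ∈ (swapChart h A).rel := by
    intro x
    by_cases h1 : ∃ w ∈ A, x = a w
    · obtain ⟨w, hw, rfl⟩ := h1
      exact ⟨b w, Or.inl ⟨w, hw, rfl, rfl⟩⟩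
    by_cases h2 : ∃ w ∈ A, x = b w
    · obtain ⟨w, hw, rfl⟩ := h2
      exact ⟨a w, Or.inr (Or.inl ⟨w, hw, rfl, rfl⟩)⟩
    exact ⟨x, Or.inr (Or.inr ⟨rfl, fun w hw => ⟨fun e => h1 ⟨w, hw, e⟩, fun e => h2 ⟨w, hw, e⟩⟩⟩)⟩
  have same : ∀ x y, (x, y) ∈ (swapChart h A).rel → ∀ B ∈ P, x ∈ B → y ∈ B := by
    intro x y hxy B hB hx
    rcases hxy with ⟨w, _, h1, h2⟩ | ⟨w, _, h1, h2⟩ | ⟨h1, _⟩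
    · simp only at h1 h2; subst h1; subst h2; exact (hP w B hB).1 hx
    · simp only at h1 h2; subst h1; subst h2; exact (hP w B hB).2 hx
    · simp only at h1; subst h1; exact hx
  refine ⟨⟨tot, fun y => ?_⟩, fun B hB => ?_⟩
  · obtain ⟨x, hx⟩ := tot y
    exact ⟨x, swap_symm h A hx⟩
  · ext y
    constructor
    · rintro ⟨x, hx, hxy⟩
      exact same x y hxy B hB hx
    · intro hy
      obtain ⟨x, hx⟩ := tot y
      exact ⟨x, same y x hx B hB hy, swap_symm h A hx⟩

/-- Encoding chart: `x ↦ b (x, k x)` if `k x < r`, otherwise `x ↦ a (x, r)`. -/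
def encChart (h : TwoInj a b) (k : X → ℕ) (r : ℕ) : Chart X where
  rel := {p | (k p.1 < r ∧ p.2 = b (p.1, k p.1)) ∨ (r ≤ k p.1 ∧ p.2 = a (p.1, r))}
  functional := by
    simp only [mem_ofPred_eq]
    grind
  injective := by
    have ia := @h.ia
    have ib := @h.ib
    have ab := h.ab
    simp only [mem_ofPred_eq]
    rintro x x' y (⟨h1, h2⟩ | ⟨h1, h2⟩) (⟨h3, h4⟩ | ⟨h3, h4⟩)
    · exact congrArg Prod.fst (ib (h2.symm.trans h4))
    · exact absurd (h4.symm.trans h2) (ab _ _)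
    · exact absurd (h2.symm.trans h4) (ab _ _)
    · exact congrArg Prod.fst (ia (h2.symm.trans h4))

/-- Step chart: fixes each `b w` and maps `a (x, r)` to `a (x, r + 1)`. -/
def stepChart (h : TwoInj a b) (r : ℕ) : Chart X where
  rel := {p | (∃ w, p.1 = b w ∧ p.2 = b w) ∨ (∃ x, p.1 = a (x, r) ∧ p.2 = a (x, r + 1))}
  functional := by
    have ia := @h.ia
    have ib := @h.ib
    have ab := h.ab
    simp only [mem_ofPred_eq]
    grind
  injective := by
    have ia := @h.ia
    have ib := @h.ib
    have ab := h.ab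
    simp only [mem_ofPred_eq]
    grind

/-- The transition chart: `b (x, k) ↦ b (y, k)` for `(x, y) ∈ t k`. -/
def transChart (h : TwoInj a b) (t : ℕ → Chart X) : Chart X where
  rel := {p | ∃ x y k, (x, y) ∈ (t k).rel ∧ p.1 = b (x, k) ∧ p.2 = b (y, k)}
  functional := by
    rintro p q q' ⟨x, y, k, h1, h2, h3⟩ ⟨x', y', k', h1', h2', h3'⟩
    simp only at h2 h3 h2' h3'
    have := h.ib (h2.symm.trans h2')
    simp only [Prod.mk.injEq] at this
    obtain ⟨rfl, rfl⟩ := this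
    obtain rfl := (t k).functional h1 h1'
    rw [h3, h3']
  injective := by
    rintro p p' q ⟨x, y, k, h1, h2, h3⟩ ⟨x', y', k', h1', h2', h3'⟩
    simp only at h2 h3 h2' h3'
    have := h.ib (h3.symm.trans h3')
    simp only [Prod.mk.injEq] at this
    obtain ⟨rfl, rfl⟩ := this
    obtain rfl := (t k).injective h1 h1'
    rw [h2, h2']

theorem enc_succ (h : TwoInj a b) (k : X → ℕ) (r : ℕ) :
    encChart h k (r + 1) =
      encChart h k r * (swapChart h {w | w.2 = r ∧ k w.1 = r} * stepChart h r) := by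
  have ia := @h.ia
  have ib := @h.ib
  have ab := h.ab
  apply Chart.ext_rel
  intro x z
  have key : ∀ x, ∃ z, (x, z) ∈ (encChart h k r *
      (swapChart h {w | w.2 = r ∧ k w.1 = r} * stepChart h r)).rel ∧
      (x, z) ∈ (encChart h k (r + 1)).rel := by
    intro x
    rcases lt_trichotomy (k x) r with hk | hk | hk
    · refine ⟨b (x, k x), ⟨b (x, k x), Or.inl ⟨hk, rfl⟩, b (x, k x), Or.inr (Or.inr ⟨rfl, ?_⟩),
        Or.inl ⟨_, rfl, rfl⟩⟩, Or.inl ⟨by simp only; omega, rfl⟩⟩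
      rintro w ⟨hw1, hw2⟩
      refine ⟨fun e => ab _ _ e.symm, fun e => ?_⟩
      have := ib e
      subst this
      simp only at hw1
      omega
    · refine ⟨b (x, k x), ⟨a (x, r), Or.inr ⟨hk.ge, rfl⟩, b (x, k x),
        Or.inl ⟨(x, r), ⟨rfl, hk⟩, rfl, ?_⟩,
        Or.inl ⟨_, rfl, rfl⟩⟩, Or.inl ⟨by simp only; omega, rfl⟩⟩
      simp only [hk]
    · refine ⟨a (x, r + 1), ⟨a (x, r), Or.inr ⟨hk.le, rfl⟩, a (x, r), Or.inr (Or.inr ⟨rfl, ?_⟩),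
        Or.inr ⟨_, rfl, rfl⟩⟩, Or.inr ⟨by simp only; omega, rfl⟩⟩
      rintro w ⟨hw1, hw2⟩
      refine ⟨fun e => ?_, fun e => ab _ _ e⟩
      have := ia e
      subst this
      simp only at hw2
      omega
  obtain ⟨z', h1, h2⟩ := key x
  constructor
  · intro hz
    rw [Chart.functional _ hz h2]; exact h1
  · intro hz
    rw [Chart.functional _ hz h1]; exact h2

theorem enc_gen (h : TwoInj a b) (S : Set (Chart X))
    (hswap : ∀ A, swapChart h A ∈ S)
    (h0 : encChart h 0 0 ∈ S) (h0' : (encChart h 0 0)⁻¹ ∈ S)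
    (hs : ∀ r, stepChart h r ∈ S) (hs' : ∀ r, (stepChart h r)⁻¹ ∈ S) (k : X → ℕ) (r : ℕ) :
    InGen S (encChart h k r) ∧ InGen S (encChart h k r)⁻¹ := by
  induction r with
  | zero =>
    have : encChart h k 0 = encChart h 0 0 := by
      apply Chart.ext_rel
      intro x z
      simp [encChart]
    rw [this]
    exact ⟨.base h0, .base h0'⟩
  | succ r ih =>
    rw [enc_succ, Chart.mul_inv', Chart.mul_inv', swap_inv]
    exact ⟨.mul ih.1 (.mul (.base (hswap _)) (.base (hs r))),
      .mul (.mul (.base (hs' r)) (.base (hswap _))) ih.2⟩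

theorem factor (h : TwoInj a b) (t : ℕ → Chart X) (r : ℕ) (f : Chart X)
    (hf : ∀ x y, (x, y) ∈ f.rel → ∃ k < r, (x, y) ∈ (t k).rel) :
    ∃ k k' : X → ℕ, f = encChart h k r * (transChart h t * (encChart h k' r)⁻¹) := by
  classical
  choose! κ hκ using hf
  let k : X → ℕ := fun x => if hx : ∃ y, (x, y) ∈ f.rel then κ x hx.choose else r
  let k' : X → ℕ := fun y => if hy : ∃ x, (x, y) ∈ f.rel then k hy.choose else r
  have hk : ∀ x y, (x, y) ∈ f.rel → k x = κ x y := by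
    intro x y hxy
    have hx : ∃ y, (x, y) ∈ f.rel := ⟨y, hxy⟩
    simp only [k, dif_pos hx]
    rw [f.functional hx.choose_spec hxy]
  have hk' : ∀ x y, (x, y) ∈ f.rel → k' y = k x := by
    intro x y hxy
    have hy : ∃ x, (x, y) ∈ f.rel := ⟨x, hxy⟩
    simp only [k', dif_pos hy]
    rw [f.injective hy.choose_spec hxy]
  refine ⟨k, k', ?_⟩
  have main : ∀ x y, (x, y) ∈ f.rel →
      (x, y) ∈ (encChart h k r * (transChart h t * (encChart h k' r)⁻¹)).rel := by
    intro x y hxy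
    obtain ⟨h1, h2⟩ := hκ x y hxy
    refine ⟨b (x, k x), Or.inl ⟨?_, rfl⟩, b (y, k x), ⟨x, y, k x, ?_, rfl, rfl⟩, Or.inl ⟨?_, ?_⟩⟩
    · simp only; rw [hk x y hxy]; exact h1
    · rw [hk x y hxy]; exact h2
    · simp only; rw [hk' x y hxy, hk x y hxy]; exact h1
    · simp only; rw [hk' x y hxy]
  apply Chart.ext_rel
  intro x z
  refine ⟨main x z, fun hz => ?_⟩
  by_cases hx : ∃ y, (x, y) ∈ f.rel
  · obtain ⟨y, hy⟩ := hx
    rw [Chart.functional _ hz (main x y hy)]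
    exact hy
  · exfalso
    have hkx : k x = r := by simp only [k, dif_neg hx]
    obtain ⟨p, hp, q, ⟨x', y', j, _, hq, _⟩, _⟩ := hz
    rcases hp with ⟨h1, _⟩ | ⟨_, h2⟩
    · simp only at h1; omega
    · exact h.ab _ _ (h2.symm.trans hq)

end

theorem exists_twoInj {X : Type u} [Infinite X] (n : ℕ) (hn : 2 ≤ n)
    (P : Set (Set X)) (hPpart : Setoid.IsPartition P)
    (hPn : ∀ B ∈ P, B.Finite ∧ B.ncard = n) :
    ∃ a b : X × ℕ → X, TwoInj a b ∧ ∀ w, ∀ B ∈ P, a w ∈ B ↔ b w ∈ B := by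
  have uniq : ∀ B ∈ P, ∀ C ∈ P, ∀ x, x ∈ B → x ∈ C → B = C := by
    intro B hB C hC x hx hx'
    exact (hPpart.2 x).unique ⟨hB, hx⟩ ⟨hC, hx'⟩
  have hun : ⋃₀ P = Set.univ := hPpart.sUnion_eq_univ
  have hPinf : P.Infinite := by
    intro hfin
    have : (⋃₀ P).Finite := hfin.sUnion fun B hB => (hPn B hB).1
    rw [hun] at this
    exact Set.infinite_univ this
  have hcard : #X ≤ #P := by
    have h1 : #X ≤ #P * ℵ₀ := by
      calc #X = #(⋃₀ P : Set X) := by rw [hun, mk_univ]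
        _ ≤ #P * ⨆ s : P, #s := mk_sUnion_le P
        _ ≤ #P * ℵ₀ := by
          gcongr
          exact ciSup_le' fun s => (hPn s s.2).1.lt_aleph0.le
    have h2 : ℵ₀ ≤ #P := infinite_iff.1 hPinf.to_subtype
    rwa [mul_aleph0_eq h2] at h1
  have hX : ℵ₀ ≤ #X := infinite_iff.1 inferInstance
  have hcard2 : #(X × ℕ) ≤ #P := by
    refine le_trans ?_ hcard
    rw [mk_prod]
    simp [mul_aleph0_eq hX]
  obtain ⟨e⟩ := (Cardinal.le_def _ _).1 hcard2
  have two : ∀ w : X × ℕ, ∃ p q, p ∈ (e w : Set X) ∧ q ∈ (e w : Set X) ∧ p ≠ q := by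
    intro w
    obtain ⟨h1, h2⟩ := hPn _ (e w).2
    obtain ⟨p, hp, q, hq, hpq⟩ := (one_lt_ncard h1).1 (by omega)
    exact ⟨p, q, hp, hq, hpq⟩
  choose a b ha hb hab using two
  have key : ∀ v w x, x ∈ (e v : Set X) → x ∈ (e w : Set X) → v = w := by
    intro v w x h1 h2
    exact e.injective (Subtype.ext (uniq _ (e v).2 _ (e w).2 x h1 h2))
  refine ⟨a, b, ⟨?_, ?_, ?_⟩, ?_⟩
  · intro v w h
    exact key v w _ (ha v) (h ▸ ha w)
  · intro v w h
    exact key v w _ (hb v) (h ▸ hb w)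
  · intro v w h
    have := key v w _ (ha v) (h ▸ hb w)
    subst this
    exact hab v h
  · intro w B hB
    constructor
    · intro h
      rw [uniq B hB _ (e w).2 _ h (ha w)]; exact hb w
    · intro h
      rw [uniq B hB _ (e w).2 _ h (hb w)]; exact ha w

theorem orbit_symm {X : Type u} {M : Set (Chart X)} (hM : IsInverseSubsemigroup M) {x y : X}
    (h : y ∈ ChartOrbit M x) : x ∈ ChartOrbit M y := by
  rcases h with rfl | ⟨f, hf, h⟩
  · exact Or.inl rfl
  · exact Or.inr ⟨f⁻¹, hM.2 f hf, h⟩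

theorem orbit_trans {X : Type u} {M : Set (Chart X)} (hM : IsInverseSubsemigroup M) {x y z : X}
    (h : y ∈ ChartOrbit M x) (h' : z ∈ ChartOrbit M y) : z ∈ ChartOrbit M x := by
  rcases h with rfl | ⟨f, hf, h⟩
  · exact h'
  rcases h' with rfl | ⟨g, hg, h'⟩
  · exact Or.inr ⟨f, hf, h⟩
  · exact Or.inr ⟨f * g, hM.1 f hf g hg, y, h, h'⟩

theorem exists_label {X : Type u} {M : Set (Chart X)} (hM : IsInverseSubsemigroup M) {m : ℕ}
    (hm : ∀ x : X, #↥(ChartOrbit M x) ≤ (m : Cardinal)) :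
    ∃ c : X → ℕ, (∀ x, c x < m) ∧
      ∀ x y z, y ∈ ChartOrbit M x → z ∈ ChartOrbit M x → c y = c z → y = z := by
  classical
  have hF : ∀ S : Set X, ∃ F : X → ℕ, #S ≤ m → (∀ x ∈ S, F x < m) ∧ InjOn F S := by
    intro S
    by_cases hS : #S ≤ m
    · have : #S ≤ #(ULift.{u} (Fin m)) := by simpa using hS
      obtain ⟨e⟩ := (Cardinal.le_def _ _).1 this
      refine ⟨fun x => if hx : x ∈ S then (e ⟨x, hx⟩).down else 0, fun _ => ⟨?_, ?_⟩⟩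
      · intro x hx
        simp [hx]
      · intro x hx y hy hxy
        simp only [hx, hy, dif_pos] at hxy
        have := e.injective (ULift.down_injective (Fin.val_injective hxy))
        exact congrArg Subtype.val this
    · exact ⟨fun _ => 0, fun h => absurd h hS⟩
  choose F hF using hF
  have heq : ∀ x y, y ∈ ChartOrbit M x → ChartOrbit M y = ChartOrbit M x := by
    intro x y h
    ext z
    exact ⟨orbit_trans hM h, orbit_trans hM (orbit_symm hM h)⟩
  refine ⟨fun x => F (ChartOrbit M x) x, fun x => (hF _ (hm x)).1 x (Or.inl rfl), ?_⟩
  intro x y z hy hz h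
  simp only [heq x y hy, heq x z hz] at h
  exact (hF _ (hm x)).2 hy hz h

/-- The fixed charts covering the orbit relation. -/
def labelChart {X : Type u} {M : Set (Chart X)} (hM : IsInverseSubsemigroup M) (c : X → ℕ)
    (hc : ∀ x y z, y ∈ ChartOrbit M x → z ∈ ChartOrbit M x → c y = c z → y = z) (k : ℕ) :
    Chart X where
  rel := {p | p.2 ∈ ChartOrbit M p.1 ∧ c p.1 = k.unpair.1 ∧ c p.2 = k.unpair.2}
  functional := by
    rintro x y y' ⟨h1, _, h2⟩ ⟨g1, _, g2⟩
    exact hc x y y' h1 g1 (h2.trans g2.symm)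
  injective := by
    rintro x x' y ⟨h1, h2, _⟩ ⟨g1, g2, _⟩
    exact hc y x x' (orbit_symm hM h1) (orbit_symm hM g1) (h2.trans g2.symm)

/-- If `n ≥ 2`, `P` is an n-uniform partition of the infinite set
`X`, and `M` is an inverse subsemigroup of `I_X` whose orbits all have at most
`m` elements for some natural number `m`, then `M ≼ PStab P`. -/
theorem stmt5 {X : Type u} [Infinite X] (n : ℕ) (hn : 2 ≤ n)
    (P : Set (Set X)) (hPpart : Setoid.IsPartition P)
    (hPn : ∀ B ∈ P, B.Finite ∧ B.ncard = n)
    (M : Set (Chart X)) (hM : IsInverseSubsemigroup M)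
    (horb : ∃ m : ℕ, ∀ x : X, #↥(ChartOrbit M x) ≤ (m : Cardinal)) :
    BSleq M (PStab P) := by
  obtain ⟨m, hm⟩ := horb
  obtain ⟨a, b, h, hab⟩ := exists_twoInj n hn P hPpart hPn
  obtain ⟨c, hcm, hc⟩ := exists_label hM hm
  let t := labelChart hM c hc
  refine ⟨{encChart h 0 0, (encChart h 0 0)⁻¹, transChart h t} ∪
    (range (stepChart h) ∪ range fun r => (stepChart h r)⁻¹), ?_, ?_⟩
  · exact (Set.toFinite _).countable.union ((countable_range _).union (countable_range _))
  intro f hf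
  obtain ⟨k, k', hfac⟩ := factor h t ((m + 1) ^ 2) f (by
    intro x y hxy
    refine ⟨Nat.pair (c x) (c y), ?_, ?_, ?_, ?_⟩
    · refine (Nat.pair_lt_max_add_one_sq _ _).trans_le ?_
      have := hcm x
      have := hcm y
      gcongr
      omega
    · exact Or.inr ⟨f, hf, hxy⟩
    · simp
    · simp)
  have gen := enc_gen h (PStab P ∪ ({encChart h 0 0, (encChart h 0 0)⁻¹, transChart h t} ∪
    (range (stepChart h) ∪ range fun r => (stepChart h r)⁻¹)))
    (fun A => Or.inl (swap_mem_PStab h A P hab))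
    (by simp) (by simp) (by simp) (by simp)
  rw [hfac]
  exact .mul (gen k _).1 (.mul (.base (by simp)) (gen k' _).2)
end

section
/- Let X be a countably infinite set and S a subsemigroup of I_X. Suppose there exist a sequence (α_i)_{i∈ω} ∈ X^ω of distinct elements and a sequence of non-empty subsets D_i ⊆ X^i (i ∈ ω) such that: (i) for each i ∈ ω and each (β_0,…,β_i) ∈ D_{i+1}, we have (β_0,…,β_{i−1}) ∈ D_i; (ii) for each i ∈ ω and each (β_0,…,β_{i−1}) ∈ D_i, there exist infinitely many β ∈ X with (β_0,…,β_{i−1},β) ∈ D_{i+1}; and (iii) whenever (β_i)_{i∈ω} ∈ X^ω satisfies (β_0,…,β_{i−1}) ∈ D_i for every i ∈ ω, there exist g, g′ ∈ S such that α_i g = β_i for all i and β_i g′ = α_i for all i (in particular each α_i ∈ dom g and each β_i ∈ dom g′). Then S ≈ I_X. -/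
open Set Cardinal

universe u

namespace StmtAux

/-- Systems of distinct representatives for countably many infinite sets. -/
theorem exists_sdr {I X : Type*} [Countable I] (A : I → Set X) (hA : ∀ i, (A i).Infinite) :
    ∃ x : I → X, Function.Injective x ∧ ∀ i, x i ∈ A i := by
  classical
  obtain ⟨c, hc⟩ := exists_injective_nat I
  have h : ∀ i, ∃ t : Finset X, (t : Set X) ⊆ A i ∧ t.card = c i + 1 :=
    fun i => (hA i).exists_subset_card_eq (c i + 1)
  choose t ht htc using h
  have hall := (Finset.all_card_le_biUnion_card_iff_exists_injective t).1 (by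
    intro s
    rcases s.eq_empty_or_nonempty with rfl | hs
    · simp
    · obtain ⟨m, hm, hmax⟩ := s.exists_max_image c hs
      have h1 : s.card ≤ c m + 1 := by
        rw [← Finset.card_image_of_injective s hc, ← Finset.card_range (c m + 1)]
        apply Finset.card_le_card
        intro y hy
        obtain ⟨i, hi, rfl⟩ := Finset.mem_image.1 hy
        have := hmax i hi
        simp; omega
      calc s.card ≤ (t m).card := by rw [htc]; exact h1
        _ ≤ _ := Finset.card_le_card (Finset.subset_biUnion_of_mem t hm))
  obtain ⟨x, hx, hxt⟩ := hall
  exact ⟨x, hx, fun i => ht i (hxt i)⟩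

/-- A tree of branches with pairwise distinct labels. -/
theorem exists_branches {X : Type*} [Countable X]
    (D : (i : ℕ) → Set (Fin i → X)) (hne : ∀ i, (D i).Nonempty)
    (h2 : ∀ (i : ℕ) (β : Fin i → X), β ∈ D i →
      {b : X | Fin.snoc (α := fun _ => X) β b ∈ D (i + 1)}.Infinite) :
    ∃ β : (ℕ → ℕ) → ℕ → X,
      (∀ n i, (fun j : Fin i => β n j.1) ∈ D i) ∧
      (∀ n n' k l, β n k = β n' l → k = l ∧ ∀ x ≤ k, n x = n' x) ∧
      (∀ n n' k, (∀ x ≤ k, n x = n' x) → β n k = β n' k) := by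
  obtain ⟨x, hx, hxA⟩ := exists_sdr
    (I := (Σ i, {v : Fin i → X // v ∈ D i}) × ℕ)
    (fun p => {b : X | Fin.snoc (α := fun _ => X) p.1.2.1 b ∈ D (p.1.1 + 1)})
    (fun p => h2 _ _ p.1.2.2)
  let N : (ℕ → ℕ) → (k : ℕ) → {v : Fin k → X // v ∈ D k} := fun n k =>
    Nat.rec ⟨(hne 0).some, (hne 0).some_mem⟩
      (fun k v => ⟨Fin.snoc (α := fun _ => X) v.1 (x (⟨k, v⟩, n k)), hxA (⟨k, v⟩, n k)⟩) k
  have hN : ∀ n k, (N n (k + 1)).1 =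
    Fin.snoc (α := fun _ => X) (N n k).1 (x (⟨k, N n k⟩, n k)) := fun n k => rfl
  have key : ∀ n k, (N n k).1 = fun j : Fin k => x (⟨j.1, N n j.1⟩, n j.1) := by
    intro n k
    induction k with
    | zero => funext j; exact j.elim0
    | succ k ih =>
      rw [hN]
      funext j
      refine Fin.lastCases ?_ (fun j => ?_) j
      · simp
      · simp [ih]
  have down : ∀ n n' k, N n k = N n' k → ∀ y < k, n y = n' y := by
    intro n n' k h y hy
    have h' := congrArg Subtype.val h
    rw [key, key] at h'
    have := congrFun h' ⟨y, hy⟩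
    exact (Prod.ext_iff.1 (hx this)).2
  refine ⟨fun n k => x (⟨k, N n k⟩, n k), ?_, ?_, ?_⟩
  · intro n i
    have := (N n i).2
    rw [key] at this
    exact this
  · intro n n' k l h
    obtain ⟨h1, h2⟩ := Prod.ext_iff.1 (hx h)
    simp only at h1 h2
    obtain ⟨rfl, h3⟩ := Sigma.mk.inj_iff.1 h1
    refine ⟨rfl, fun y hy => ?_⟩
    rcases hy.lt_or_eq with hy | rfl
    · exact down n n' k (eq_of_heq h3) y hy
    · exact h2
  · intro n n' k h
    have : ∀ j ≤ k, N n j = N n' j := by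
      intro j hj
      induction j with
      | zero => rfl
      | succ j ih =>
        apply Subtype.ext
        rw [hN, hN, ih (by omega), h j (by omega)]
    simp only
    rw [this k le_rfl, h k le_rfl]

/-- A partial injection of the naturals compatible with two finite-block structures. -/
structure Config where
  h : ℕ → ℕ → Prop
  a : ℕ → ℕ
  b : ℕ → ℕ
  hab : ∀ i j, h i j → a i = b j
  func : ∀ i j j', h i j → h i j' → j = j'
  inj : ∀ i i' j, h i j → h i' j → i = i'
  mono_a : Monotone a
  mono_b : Monotone b
  fin_a : ∀ k, {i | a i ≤ k}.Finite
  fin_b : ∀ k, {i | b i ≤ k}.Finite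

/-- Two configurations agree up to block `k`. -/
def Agree (c c' : Config) (k : ℕ) : Prop :=
  ∀ l ≤ k, (∀ i, c.a i = l ↔ c'.a i = l) ∧ (∀ i, c.b i = l ↔ c'.b i = l) ∧
    ∀ i j, c.a i = l → (c.h i j ↔ c'.h i j)

theorem Agree.mono {c c' : Config} {k l : ℕ} (h : Agree c c' k) (hl : l ≤ k) : Agree c c' l :=
  fun m hm => h m (hm.trans hl)

theorem exists_code : ∃ R : Config → ℕ → ℕ, ∀ c c' k k',
    R c k = R c' k' ↔ k = k' ∧ Agree c c' k := by
  classical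
  have hf1 : ∀ (c : Config) (k : ℕ), {p : ℕ × ℕ | p.2 ≤ k ∧ c.a p.1 = p.2}.Finite := by
    intro c k
    refine ((c.fin_a k).image (fun i => (i, c.a i))).subset ?_
    rintro ⟨i, l⟩ ⟨h1, h2⟩
    simp only at h1 h2
    subst h2
    exact ⟨i, h1, rfl⟩
  have hf2 : ∀ (c : Config) (k : ℕ), {p : ℕ × ℕ | p.2 ≤ k ∧ c.b p.1 = p.2}.Finite := by
    intro c k
    refine ((c.fin_b k).image (fun i => (i, c.b i))).subset ?_
    rintro ⟨i, l⟩ ⟨h1, h2⟩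
    simp only at h1 h2
    subst h2
    exact ⟨i, h1, rfl⟩
  have hf3 : ∀ (c : Config) (k : ℕ), {p : ℕ × ℕ | c.a p.1 ≤ k ∧ c.h p.1 p.2}.Finite := by
    intro c k
    refine ((c.fin_a k).prod (c.fin_b k)).subset ?_
    rintro ⟨i, j⟩ ⟨h1, h2⟩
    exact ⟨h1, by have := c.hab _ _ h2; simp only [Set.mem_ofPred_eq] at *; omega⟩
  refine ⟨fun c k => Encodable.encode
    (k, (hf1 c k).toFinset, (hf2 c k).toFinset, (hf3 c k).toFinset), ?_⟩
  intro c c' k k'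
  rw [Encodable.encode_inj]
  simp only [Prod.mk.injEq, Set.Finite.toFinset_inj]
  constructor
  · rintro ⟨rfl, e1, e2, e3⟩
    refine ⟨rfl, fun l hl => ?_⟩
    have e1' : ∀ i, c.a i = l ↔ c'.a i = l := fun i => by
      have := Set.ext_iff.1 e1 (i, l)
      simpa [hl] using this
    refine ⟨e1', fun i => ?_, fun i j hi => ?_⟩
    · have := Set.ext_iff.1 e2 (i, l)
      simpa [hl] using this
    · have := Set.ext_iff.1 e3 (i, j)
      simpa [hi, hl, (e1' i).1 hi] using this
  · rintro ⟨rfl, H⟩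
    refine ⟨rfl, ?_, ?_, ?_⟩
    · ext ⟨i, l⟩
      exact and_congr_right fun hl => (H l hl).1 i
    · ext ⟨i, l⟩
      exact and_congr_right fun hl => (H l hl).2.1 i
    · ext ⟨i, j⟩
      simp only [Set.mem_ofPred_eq]
      constructor
      · rintro ⟨h1, h2⟩
        have := ((H _ h1).1 i).1 rfl
        exact ⟨by omega, ((H _ h1).2.2 i j rfl).1 h2⟩
      · rintro ⟨h1, h2⟩
        have := ((H _ h1).1 i).2 rfl
        exact ⟨by omega, ((H _ h1).2.2 i j this).2 h2⟩

/-- The block decomposition of a partial injection into two configurations. -/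
theorem exists_decomp (f : ℕ → ℕ → Prop) (func : ∀ i j j', f i j → f i j' → j = j')
    (inj : ∀ i i' j, f i j → f i' j → i = i') :
    ∃ c d : Config, ∀ i j, f i j ↔ ∃ k, c.h i k ∧ d.h k j := by
  classical
  have hB : ∀ N : ℕ, ∃ M : ℕ, N < M ∧ ∀ i j, f i j → (i < N → j < M) ∧ (j < N → i < M) := by
    intro N
    have h1 : {j | ∃ i < N, f i j}.Finite := by
      have : {j | ∃ i < N, f i j} = ⋃ i ∈ Set.Iio N, {j | f i j} := by ext; simp
      rw [this]
      exact (Set.finite_Iio N).biUnion fun i _ =>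
        Set.Subsingleton.finite fun x hx y hy => func i x y hx hy
    have h2 : {i | ∃ j < N, f i j}.Finite := by
      have : {i | ∃ j < N, f i j} = ⋃ j ∈ Set.Iio N, {i | f i j} := by ext; simp
      rw [this]
      exact (Set.finite_Iio N).biUnion fun j _ =>
        Set.Subsingleton.finite fun x hx y hy => inj x y j hx hy
    obtain ⟨M1, hM1⟩ := h1.bddAbove
    obtain ⟨M2, hM2⟩ := h2.bddAbove
    refine ⟨N + M1 + M2 + 1, by omega, fun i j hij => ⟨fun hi => ?_, fun hj => ?_⟩⟩
    · have : j ≤ M1 := hM1 ⟨i, hi, hij⟩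
      omega
    · have : i ≤ M2 := hM2 ⟨j, hj, hij⟩
      omega
  choose B hB1 hB2 using hB
  let w : ℕ → ℕ := fun k => B^[k] 0
  have hw : ∀ k, w (k + 1) = B (w k) := fun k => Function.iterate_succ_apply' _ _ _
  have hwm : StrictMono w := strictMono_nat_of_lt_succ fun k => by rw [hw]; exact hB1 _
  have hex : ∀ i, ∃ k, i < w k := fun i => ⟨i + 1, lt_of_lt_of_le (Nat.lt_succ_self i) (hwm.id_le _)⟩
  let β : ℕ → ℕ := fun i => Nat.find (hex i)
  have hβ : ∀ i k, β i ≤ k ↔ i < w k := by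
    intro i k
    constructor
    · intro h
      exact lt_of_lt_of_le (Nat.find_spec (hex i)) (hwm.monotone h)
    · intro h
      exact Nat.find_min' _ h
  have hβm : Monotone β := fun i j hij => (hβ _ _).2 (lt_of_le_of_lt hij ((hβ _ _).1 le_rfl))
  have hβf : ∀ k, {i | β i ≤ k}.Finite := fun k =>
    (Set.finite_Iio (w k)).subset fun i hi => (hβ _ _).1 hi
  have hβ1 : ∀ i j, f i j → β j ≤ β i + 1 ∧ β i ≤ β j + 1 := by
    intro i j hij
    constructor
    · rw [hβ, hw]
      exact (hB2 _ i j hij).1 ((hβ _ _).1 le_rfl)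
    · rw [hβ, hw]
      exact (hB2 _ i j hij).2 ((hβ _ _).1 le_rfl)
  have fin2 : ∀ k, {i | β (i / 2) ≤ k}.Finite := fun k =>
    (Set.finite_Iio (2 * w k)).subset fun i hi => by
      have := (hβ _ _).1 hi
      simp only [Set.mem_Iio]
      omega
  let c : Config :=
    { h := fun i k => ∃ j, f i j ∧ ((β i / 2 ≠ β j / 2 ∧ k = 2 * i) ∨
        (β i / 2 = β j / 2 ∧ k = 2 * j + 1))
      a := fun i => β i / 2
      b := fun i => β (i / 2) / 2
      hab := by
        rintro i k ⟨j, hij, ⟨h, rfl⟩ | ⟨h, rfl⟩⟩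
        · simp
        · have : (2 * j + 1) / 2 = j := by omega
          simp only [this]; exact h
      func := by
        rintro i k k' ⟨j, hij, h⟩ ⟨j', hij', h'⟩
        obtain rfl := func _ _ _ hij hij'
        omega
      inj := by
        rintro i i' k ⟨j, hij, h⟩ ⟨j', hij', h'⟩
        rcases h with ⟨h, rfl⟩ | ⟨h, rfl⟩ <;> rcases h' with ⟨h', e⟩ | ⟨h', e⟩
        · omega
        · omega
        · omega
        · obtain rfl : j = j' := by omega
          exact inj _ _ _ hij hij'
      mono_a := fun i j hij => Nat.div_le_div_right (hβm hij)
      mono_b := fun i j hij => Nat.div_le_div_right (hβm (Nat.div_le_div_right hij))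
      fin_a := fun k => (hβf (2 * k + 1)).subset fun i hi => by
        simp only [Set.mem_ofPred_eq] at *; omega
      fin_b := fun k => (fin2 (2 * k + 1)).subset fun i hi => by
        simp only [Set.mem_ofPred_eq] at *; omega }
  let d : Config :=
    { h := fun k j => ∃ i, f i j ∧ ((β i / 2 ≠ β j / 2 ∧ k = 2 * i) ∨
        (β i / 2 = β j / 2 ∧ k = 2 * j + 1))
      a := fun i => (β (i / 2) + 1) / 2
      b := fun i => (β i + 1) / 2
      hab := by
        rintro k j ⟨i, hij, ⟨h, rfl⟩ | ⟨h, rfl⟩⟩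
        · have : (2 * i) / 2 = i := by omega
          simp only [this]
          have := hβ1 i j hij
          omega
        · have : (2 * j + 1) / 2 = j := by omega
          simp only [this]
      func := by
        rintro k j j' ⟨i, hij, h⟩ ⟨i', hij', h'⟩
        rcases h with ⟨h, rfl⟩ | ⟨h, rfl⟩ <;> rcases h' with ⟨h', e⟩ | ⟨h', e⟩
        · obtain rfl : i = i' := by omega
          exact func _ _ _ hij hij'
        · omega
        · omega
        · omega
      inj := by
        rintro k k' j ⟨i, hij, h⟩ ⟨i', hij', h'⟩
        obtain rfl := inj _ _ _ hij hij'
        omega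
      mono_a := fun i j hij => Nat.div_le_div_right
        (Nat.add_le_add_right (hβm (Nat.div_le_div_right hij)) 1)
      mono_b := fun i j hij => Nat.div_le_div_right (Nat.add_le_add_right (hβm hij) 1)
      fin_a := fun k => (fin2 (2 * k + 1)).subset fun i hi => by
        simp only [Set.mem_ofPred_eq] at *; omega
      fin_b := fun k => (hβf (2 * k + 1)).subset fun i hi => by
        simp only [Set.mem_ofPred_eq] at *; omega }
  refine ⟨c, d, fun i j => ⟨fun hij => ?_, ?_⟩⟩
  · by_cases h : β i / 2 = β j / 2
    · exact ⟨2 * j + 1, ⟨j, hij, Or.inr ⟨h, rfl⟩⟩, ⟨i, hij, Or.inr ⟨h, rfl⟩⟩⟩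
    · exact ⟨2 * i, ⟨j, hij, Or.inl ⟨h, rfl⟩⟩, ⟨i, hij, Or.inl ⟨h, rfl⟩⟩⟩
  · rintro ⟨k, ⟨j', hij', h'⟩, ⟨i', hij, h⟩⟩
    rcases h with ⟨h, rfl⟩ | ⟨h, rfl⟩ <;> rcases h' with ⟨h', e⟩ | ⟨h', e⟩
    · obtain rfl : i' = i := by omega
      exact hij
    · omega
    · omega
    · obtain rfl : j = j' := by omega
      exact hij'

theorem chart_ext {X : Type*} {f g : Chart X} (h : ∀ x y, (x, y) ∈ f.rel ↔ (x, y) ∈ g.rel) :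
    f = g := by
  obtain ⟨r, _, _⟩ := f
  obtain ⟨r', _, _⟩ := g
  have : r = r' := Set.ext fun ⟨x, y⟩ => h x y
  subst this
  rfl

theorem chart_mem_mul {X : Type*} (f g : Chart X) (x z : X) :
    (x, z) ∈ (f * g).rel ↔ ∃ y, (x, y) ∈ f.rel ∧ (y, z) ∈ g.rel := Iff.rfl

theorem chart_mem_inv {X : Type*} (f : Chart X) (x z : X) :
    (x, z) ∈ (f⁻¹).rel ↔ (z, x) ∈ f.rel := Iff.rfl

/-- A configuration, transported to a chart on `X`. -/
def toChart {X : Type*} (e : X ≃ ℕ) (c : Config) : Chart X where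
  rel := {p | c.h (e p.1) (e p.2)}
  functional := fun _ _ _ h h' => e.injective (c.func _ _ _ h h')
  injective := fun _ _ _ h h' => e.injective (c.inj _ _ _ h h')

end StmtAux

open StmtAux in
/-- analogue of Bergman–Shelah Lemma 10: under the stated hypotheses
on the sequence `α`, the sets `D i` and the subsemigroup `S` of `I_X`,
we get `S ≈ I_X`. -/
theorem stmt7 {X : Type u} [Countable X] [Infinite X] (S : Set (Chart X))
    (hS : IsSubsemigroup S)
    (α : ℕ → X) (hα : Function.Injective α)
    (D : (i : ℕ) → Set (Fin i → X)) (hne : ∀ i, (D i).Nonempty)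
    (h1 : ∀ (i : ℕ) (β : Fin (i + 1) → X), β ∈ D (i + 1) → Fin.init β ∈ D i)
    (h2 : ∀ (i : ℕ) (β : Fin i → X), β ∈ D i →
      {b : X | Fin.snoc β b ∈ D (i + 1)}.Infinite)
    (h3 : ∀ β : ℕ → X, (∀ i : ℕ, (fun j : Fin i => β j.1) ∈ D i) →
      ∃ g ∈ S, ∃ g' ∈ S, ∀ i : ℕ, (α i, β i) ∈ g.rel ∧ (β i, α i) ∈ g'.rel) :
    BSequiv S (Set.univ : Set (Chart X)) := by
  refine ⟨⟨∅, Set.countable_empty, fun f _ => InGen.base (Or.inl (Set.mem_univ f))⟩, ?_⟩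
  obtain ⟨β, hβD, hβ1, hβ2⟩ := exists_branches D hne h2
  obtain ⟨R, hR⟩ := exists_code
  have : Nonempty (X ≃ ℕ) := by
    obtain ⟨_⟩ := nonempty_denumerable X
    exact ⟨Denumerable.eqv X⟩
  obtain ⟨e⟩ := this
  -- equality on the source side
  have src : ∀ c c' i i', β (fun x => R c (c.a x)) i = β (fun x => R c' (c'.a x)) i' →
      i = i' ∧ Agree c c' (c.a i) := by
    intro c c' i i' h
    obtain ⟨rfl, hh⟩ := hβ1 _ _ _ _ h
    exact ⟨rfl, ((hR _ _ _ _).1 (hh i le_rfl)).2⟩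
  have tgt : ∀ c c' i i', β (fun x => R c (c.b x)) i = β (fun x => R c' (c'.b x)) i' →
      i = i' ∧ Agree c c' (c.b i) := by
    intro c c' i i' h
    obtain ⟨rfl, hh⟩ := hβ1 _ _ _ _ h
    exact ⟨rfl, ((hR _ _ _ _).1 (hh i le_rfl)).2⟩
  have srcA : ∀ c c' i, Agree c c' (c.a i) →
      β (fun x => R c (c.a x)) i = β (fun x => R c' (c'.a x)) i := by
    intro c c' i h
    refine hβ2 _ _ _ fun x hx => (hR _ _ _ _).2 ?_
    have hm := c.mono_a hx
    exact ⟨(((h _ hm).1 x).1 rfl).symm, h.mono hm⟩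
  have tgtA : ∀ c c' i, Agree c c' (c.b i) →
      β (fun x => R c (c.b x)) i = β (fun x => R c' (c'.b x)) i := by
    intro c c' i h
    refine hβ2 _ _ _ fun x hx => (hR _ _ _ _).2 ?_
    have hm := c.mono_b hx
    exact ⟨(((h _ hm).2.1 x).1 rfl).symm, h.mono hm⟩
  let u : Chart X :=
    { rel := {p | ∃ (c : Config) (i j : ℕ), c.h i j ∧ p.1 = β (fun x => R c (c.a x)) i ∧
        p.2 = β (fun x => R c (c.b x)) j}
      functional := by
        rintro x y y' ⟨c, i, j, hij, hx, hy⟩ ⟨c', i', j', hij', hx', hy'⟩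
        simp only at hx hy hx' hy'
        obtain ⟨rfl, hA⟩ := src c c' i i' (hx.symm.trans hx')
        have := ((hA _ le_rfl).2.2 i j rfl).1 hij
        obtain rfl := c'.func _ _ _ this hij'
        rw [hy, hy']
        exact tgtA c c' j (by rw [← c.hab _ _ hij]; exact hA)
      injective := by
        rintro x x' y ⟨c, i, j, hij, hx, hy⟩ ⟨c', i', j', hij', hx', hy'⟩
        simp only at hx hy hx' hy'
        obtain ⟨rfl, hA⟩ := tgt c c' j j' (hy.symm.trans hy')
        rw [← c.hab _ _ hij] at hA
        have := ((hA _ le_rfl).2.2 i j rfl).1 hij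
        obtain rfl := c'.inj _ _ _ this hij'
        rw [hx, hx']
        exact srcA c c' i hA }
  have hu : ∀ (c : Config) i y, (β (fun x => R c (c.a x)) i, y) ∈ u.rel ↔
      ∃ j, c.h i j ∧ y = β (fun x => R c (c.b x)) j := by
    intro c i y
    constructor
    · rintro ⟨c', i', j, hij, hx, hy⟩
      simp only at hx hy
      obtain ⟨rfl, hA⟩ := src c c' i i' hx
      have := ((hA _ le_rfl).2.2 i j rfl).2 hij
      refine ⟨j, this, hy.trans (tgtA c c' j ?_).symm⟩
      rw [← c.hab _ _ this]; exact hA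
    · rintro ⟨j, hij, hy⟩
      exact ⟨c, i, j, hij, rfl, hy⟩
  let ε : Chart X :=
    { rel := {p | p.2 = α (e p.1)}
      functional := fun x y y' h h' => Eq.trans h (Eq.symm h')
      injective := fun x x' y h h' => e.injective (hα (Eq.trans (Eq.symm h) h')) }
  have hε : ∀ x y, (x, y) ∈ ε.rel ↔ y = α (e x) := fun x y => Iff.rfl
  refine ⟨{ε, u, ε⁻¹}, by simp, ?_⟩
  have main : ∀ c : Config, InGen (S ∪ {ε, u, ε⁻¹}) (toChart e c) := by
    intro c
    obtain ⟨g, hgS, _, _, hg⟩ := h3 _ (hβD (fun x => R c (c.a x)))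
    obtain ⟨_, _, g', hgS', hg'⟩ := h3 _ (hβD (fun x => R c (c.b x)))
    have : toChart e c = ε * g * u * g' * ε⁻¹ := by
      apply chart_ext
      intro x z
      simp only [chart_mem_mul, chart_mem_inv, hε]
      constructor
      · intro h
        have h : c.h (e x) (e z) := h
        exact ⟨_, ⟨_, ⟨_, ⟨_, rfl, (hg _).1⟩, (hu _ _ _).2 ⟨_, h, rfl⟩⟩, (hg' _).2⟩, rfl⟩
      · rintro ⟨_, ⟨y3, ⟨y2, ⟨_, rfl, k1⟩, k2⟩, k3⟩, rfl⟩
        obtain rfl := g.functional k1 (hg _).1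
        obtain ⟨j, hj, rfl⟩ := (hu _ _ _).1 k2
        have := hα (g'.functional k3 (hg' _).2)
        subst this
        exact hj
    rw [this]
    refine ((((InGen.base ?_).mul (.base (Or.inl hgS))).mul (.base ?_)).mul
      (.base (Or.inl hgS'))).mul (.base ?_) <;> right <;> simp
  intro f _
  obtain ⟨c, d, hcd⟩ := exists_decomp (fun i j => (e.symm i, e.symm j) ∈ f.rel)
    (fun i j j' h h' => e.symm.injective (f.functional h h'))
    (fun i i' j h h' => e.symm.injective (f.injective h h'))
  have : f = toChart e c * toChart e d := by
    apply chart_ext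
    intro x z
    have := hcd (e x) (e z)
    simp only [Equiv.symm_apply_apply] at this
    rw [this, chart_mem_mul]
    constructor
    · rintro ⟨k, h, h'⟩
      refine ⟨e.symm k, ?_, ?_⟩
      · change c.h (e x) (e (e.symm k)); simpa using h
      · change d.h (e (e.symm k)) (e z); simpa using h'
    · rintro ⟨y, h, h'⟩
      exact ⟨e y, h, h'⟩
  rw [this]
  exact (main c).mul (main d)
end

section
/- Let X be a countably infinite set and S a subsemigroup of I_X. Suppose there exist a sequence (α_i)_{i∈ω} ∈ X^ω of distinct elements, an unbounded sequence of positive integers (N_i)_{i∈ω}, and a sequence of non-empty subsets D_i ⊆ X^i (i ∈ ω) such that: (i) for each i ∈ ω and each (β_0,…,β_i) ∈ D_{i+1}, we have (β_0,…,β_{i−1}) ∈ D_i; (ii) for each i ∈ ω and each (β_0,…,β_{i−1}) ∈ D_i, there exist at least N_i elements β ∈ X with (β_0,…,β_{i−1},β) ∈ D_{i+1}; and (iii) whenever (β_i)_{i∈ω} ∈ X^ω satisfies (β_0,…,β_{i−1}) ∈ D_i for every i ∈ ω, there exist g, g′ ∈ S such that α_i g = β_i for all i and β_i g′ = α_i for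 all i. Then PStab(𝒫_ω) ≼ S. -/
open Set Cardinal

universe u

theorem st8_choose {Q X : Type*} [Finite Q] (C : Q → Finset X) (hC : ∀ q, Nat.card Q ≤ (C q).card) :
    ∃ b : Q → X, Function.Injective b ∧ ∀ q, b q ∈ C q := by
  classical
  have := Fintype.ofFinite Q
  refine (Finset.all_card_le_biUnion_card_iff_exists_injective C).1 fun s => ?_
  rcases s.eq_empty_or_nonempty with rfl | ⟨q, hq⟩
  · simp
  · calc s.card ≤ Fintype.card Q := s.card_le_univ
      _ = Nat.card Q := (Nat.card_eq_fintype_card).symm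
      _ ≤ (C q).card := hC q
      _ ≤ _ := Finset.card_le_card (Finset.subset_biUnion_of_mem C hq)

section
variable {X : Type u} (D : (i : ℕ) → Set (Fin i → X))

/-- the prefix of length `i` of `β` belongs to `D i` -/
def St8Pre (i : ℕ) (β : ℕ → X) : Prop := (fun j : Fin i => β j.1) ∈ D i

theorem st8_pre_congr {i : ℕ} {β γ : ℕ → X} (h : ∀ j < i, β j = γ j) (hb : St8Pre D i β) :
    St8Pre D i γ := by
  have : (fun j : Fin i => β j.1) = fun j : Fin i => γ j.1 := funext fun j => h j.1 j.2
  unfold St8Pre at *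
  rwa [← this]

theorem st8_snoc [DecidableEq X] (i : ℕ) (β : ℕ → X) (b : X) :
    (Fin.snoc (fun j : Fin i => β j.1) b : Fin (i+1) → X)
      = fun j : Fin (i+1) => Function.update β i b j.1 := by
  funext j
  refine Fin.lastCases ?_ (fun j => ?_) j
  · simp
  · simp [Function.update, j.2.ne]

theorem st8_pre_mono (h1 : ∀ (i : ℕ) (β : Fin (i + 1) → X), β ∈ D (i + 1) → Fin.init β ∈ D i)
    {i j : ℕ} (hij : i ≤ j) {β : ℕ → X} (hb : St8Pre D j β) : St8Pre D i β := by
  induction j, hij using Nat.le_induction with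
  | base => exact hb
  | succ j _ ih => exact ih (h1 j _ hb)

theorem st8_ext (h1 : ∀ (i : ℕ) (β : Fin (i + 1) → X), β ∈ D (i + 1) → Fin.init β ∈ D i)
    (hs : ∀ (i : ℕ) (β : ℕ → X), St8Pre D i β → ∃ b, St8Pre D (i+1) (Function.update β i b))
    (i : ℕ) (β : ℕ → X) (hb : St8Pre D i β) :
    ∃ γ : ℕ → X, (∀ m, St8Pre D m γ) ∧ ∀ j < i, γ j = β j := by
  classical
  have : Nonempty X := ⟨β 0⟩
  choose! b hbb using hs
  let s : ℕ → ℕ → X := fun n => Nat.rec β (fun n γ => Function.update γ (i+n) (b (i+n) γ)) n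
  have s1 : ∀ n, s (n+1) = Function.update (s n) (i+n) (b (i+n) (s n)) := fun n => rfl
  have hP : ∀ n, St8Pre D (i+n) (s n) := by
    intro n
    induction n with
    | zero => exact hb
    | succ n ih => rw [s1]; exact hbb _ _ ih
  have hst : ∀ n m, n ≤ m → ∀ j < i + n, s m j = s n j := by
    intro n m hnm j hj
    induction m, hnm using Nat.le_induction with
    | base => rfl
    | succ m hm ih => rw [s1, Function.update_of_ne (by omega), ih]
  refine ⟨fun j => s (j+1) j, fun m => ?_, fun j hj => ?_⟩
  · refine st8_pre_congr D ?_ (st8_pre_mono D h1 (by omega : m ≤ i + m) (hP m))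
    intro j hj
    exact hst (j+1) m hj j (by omega)
  · exact hst 0 (j+1) (by omega) j (by omega)

theorem st8_step {F : Type*} 
    (N : ℕ → ℕ) (hNunb : ∀ m : ℕ, ∃ i, m ≤ N i)
    (h2 : ∀ (i : ℕ) (β : Fin i → X), β ∈ D i →
      (N i : Cardinal) ≤ #↥{b : X | Fin.snoc β b ∈ D (i + 1)})
    (hext : ∀ (i : ℕ) (β : ℕ → X), St8Pre D i β →
      ∃ γ : ℕ → X, (∀ m, St8Pre D m γ) ∧ ∀ j < i, γ j = β j)
    (r : Setoid F) [Finite (Quotient r)] (l : ℕ) (φ : F → ℕ → X)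
    (hφ : ∀ f m, St8Pre D m (φ f)) (hr : ∀ f f', r f f' → φ f = φ f') :
    ∃ (i : ℕ) (φ' : F → ℕ → X), l ≤ i ∧ (∀ f m, St8Pre D m (φ' f)) ∧
      (∀ f f', r f f' → φ' f = φ' f') ∧ (∀ f, ∀ j < i, φ' f j = φ f j) ∧
      (∀ f f', φ' f i = φ' f' i → r f f') ∧ ∀ f g, ∀ j < l, φ' f i ≠ φ g j := by
  classical
  let A : Set X := range fun p : Quotient r × Fin l => φ p.1.out p.2
  have hA : A.Finite := finite_range _
  have hmemA : ∀ g, ∀ j < l, φ g j ∈ A := by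
    intro g j hj
    refine ⟨(⟦g⟧, ⟨j, hj⟩), ?_⟩
    have : φ (Quotient.out (⟦g⟧ : Quotient r)) = φ g := hr _ _ (Quotient.mk_out g)
    simp [this]
  obtain ⟨i, hi⟩ := hNunb (hA.toFinset.card + Nat.card (Quotient r) + ∑ j ∈ Finset.range l, N j + 1)
  have hli : l ≤ i := by
    by_contra hlt
    have := Finset.single_le_sum (f := N) (fun j _ => Nat.zero_le _) (Finset.mem_range.2 (not_le.1 hlt))
    omega
  have hT : ∀ q : Quotient r, ∃ T : Finset X, T.card = N i ∧
      ∀ b ∈ T, St8Pre D (i+1) (Function.update (φ q.out) i b) := by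
    intro q
    have h := h2 i _ (hφ q.out i)
    obtain ⟨p, hp, hc⟩ := Cardinal.le_mk_iff_exists_subset.1 h
    have hpf : p.Finite := by
      rw [← Cardinal.lt_aleph0_iff_set_finite, hc]; exact Cardinal.natCast_lt_aleph0
    refine ⟨hpf.toFinset, ?_, ?_⟩
    · have := Cardinal.mk_coe_finset (s := hpf.toFinset)
      have h3 : #↥hpf.toFinset = #↥p := by simp
      rw [h3, hc] at this
      exact_mod_cast this.symm
    · intro b hb
      have := hp (hpf.mem_toFinset.1 hb)
      simp only [mem_setOf_eq] at this
      rw [st8_snoc] at this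
      exact this
  choose T hTc hTm using hT
  obtain ⟨b, hbi, hbm⟩ := st8_choose (fun q => T q \ hA.toFinset) (by
    intro q
    have := Finset.le_card_sdiff hA.toFinset (T q)
    rw [hTc] at this
    omega)
  have hb1 : ∀ q, b q ∈ T q := fun q => (Finset.mem_sdiff.1 (hbm q)).1
  have hb2 : ∀ q, b q ∉ A := fun q h => (Finset.mem_sdiff.1 (hbm q)).2 (hA.mem_toFinset.2 h)
  choose ψ hψ1 hψ2 using fun q => hext (i+1) _ (hTm q (b q) (hb1 q))
  have hψi : ∀ q, ψ q i = b q := fun q => by rw [hψ2 q i (by omega)]; simp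
  refine ⟨i, fun f => ψ ⟦f⟧, hli, fun f m => hψ1 _ m, fun f f' h => ?_, fun f j hj => ?_,
    fun f f' h => ?_, fun f g j hj h => ?_⟩
  · simp only [Quotient.sound (s := r) h]
  · have : φ (Quotient.out (⟦f⟧ : Quotient r)) = φ f := hr _ _ (Quotient.mk_out f)
    simp only
    rw [hψ2 _ j (by omega), Function.update_of_ne (by omega), this]
  · simp only [hψi] at h
    exact Quotient.exact (hbi h)
  · simp only [hψi] at h
    exact hb2 _ (h ▸ hmemA g j hj)

theorem st8_tree {F : Type*} 
    (N : ℕ → ℕ) (hNunb : ∀ m : ℕ, ∃ i, m ≤ N i)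
    (h2 : ∀ (i : ℕ) (β : Fin i → X), β ∈ D i →
      (N i : Cardinal) ≤ #↥{b : X | Fin.snoc β b ∈ D (i + 1)})
    (hext : ∀ (i : ℕ) (β : ℕ → X), St8Pre D i β →
      ∃ γ : ℕ → X, (∀ m, St8Pre D m γ) ∧ ∀ j < i, γ j = β j)
    (β0 : ℕ → X) (h0 : ∀ m, St8Pre D m β0)
    (r : ℕ → Setoid F) (hfin : ∀ n, Finite (Quotient (r n)))
    (hdec : ∀ n f f', r (n+1) f f' → r n f f') :
    ∃ (ι : ℕ → ℕ) (β : F → ℕ → X), (∀ f m, St8Pre D m (β f)) ∧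
      ∀ f f' n n', β f (ι n) = β f' (ι n') ↔ n = n' ∧ r n f f' := by
  classical
  let Inv : ℕ → ℕ × (F → ℕ → X) → Prop := fun n p =>
    (∀ f m, St8Pre D m (p.2 f)) ∧ ∀ f f', r n f f' → p.2 f = p.2 f'
  have hstep : ∀ n p, Inv n p → ∃ p' : ℕ × (F → ℕ → X), p.1 ≤ p'.1 - 1 ∧ 1 ≤ p'.1 ∧
      (∀ f m, St8Pre D m (p'.2 f)) ∧
      (∀ f f', r n f f' → p'.2 f = p'.2 f') ∧ (∀ f, ∀ j < p'.1 - 1, p'.2 f j = p.2 f j) ∧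
      (∀ f f', p'.2 f (p'.1 - 1) = p'.2 f' (p'.1 - 1) → r n f f') ∧
      ∀ f g, ∀ j < p.1, p'.2 f (p'.1 - 1) ≠ p.2 g j := by
    rintro n ⟨l, φ⟩ ⟨ha, hb⟩
    have := hfin n
    obtain ⟨i, φ', h⟩ := st8_step D N hNunb h2 hext (r n) l φ ha hb
    exact ⟨(i+1, φ'), by simpa using h⟩
  have : Nonempty (ℕ × (F → ℕ → X)) := ⟨(0, fun _ => β0)⟩
  choose! nx hnx using hstep
  let s : ℕ → ℕ × (F → ℕ → X) := fun n => Nat.rec (0, fun _ => β0) (fun n p => nx n p) n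
  have s1 : ∀ n, s (n+1) = nx n (s n) := fun n => rfl
  have hI : ∀ n, Inv n (s n) := by
    intro n
    induction n with
    | zero => exact ⟨fun f m => h0 m, fun _ _ _ => rfl⟩
    | succ n ih =>
      obtain ⟨-, -, a, b, -⟩ := hnx n _ ih
      exact ⟨fun f m => a f m, fun f f' h => b f f' (hdec n f f' h)⟩
  have hn : ∀ n, _ := fun n => hnx n (s n) (hI n)
  simp only [← s1] at hn
  have hlt : ∀ n, (s n).1 < (s (n+1)).1 := fun n => by
    have := (hn n).1; have := (hn n).2.1; omega
  have hmono : StrictMono fun n => (s n).1 := strictMono_nat_of_lt_succ hlt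
  have hge : ∀ n, n ≤ (s n).1 := fun n => hmono.le_apply
  have hst : ∀ n m, n ≤ m → ∀ f, ∀ j < (s n).1, (s m).2 f j = (s n).2 f j := by
    intro n m hnm f j hj
    induction m, hnm using Nat.le_induction with
    | base => rfl
    | succ m hm ih =>
      rw [(hn m).2.2.2.2.1 f j, ih]
      have : (s n).1 ≤ (s m).1 := hmono.monotone hm
      have := (hn m).1
      omega
  have hβ : ∀ f n, ∀ j < (s n).1, (s (j+1)).2 f j = (s n).2 f j := by
    intro f n j hj
    rcases le_total n (j+1) with h | h
    · exact hst _ _ h f j hj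
    · exact (hst _ _ h f j (hge _)).symm
  have hlast : ∀ f n, (s ((s (n+1)).1 - 1 + 1)).2 f ((s (n+1)).1 - 1)
      = (s (n+1)).2 f ((s (n+1)).1 - 1) := fun f n => hβ f (n+1) _ (by
        have := (hn n).2.1; omega)
  have hne : ∀ f f' n n', n < n' → (s (n+1)).2 f ((s (n+1)).1 - 1) ≠
      (s (n'+1)).2 f' ((s (n'+1)).1 - 1) := by
    intro f f' n n' h heq
    have h3 : (s (n+1)).1 ≤ (s n').1 := hmono.monotone h
    have h4 := (hn n).2.1
    refine (hn n').2.2.2.2.2.2 f' f ((s (n+1)).1 - 1) (by omega) ?_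
    rw [← heq, hst (n+1) n' h f _ (by omega)]
  refine ⟨fun n => (s (n+1)).1 - 1, fun f j => (s (j+1)).2 f j, fun f m => ?_, fun f f' n n' => ?_⟩
  · exact st8_pre_congr D (fun j hj => (hβ f m j (hj.trans_le (hge m))).symm) ((hI m).1 f m)
  · simp only [hlast]
    constructor
    · intro h
      rcases lt_trichotomy n n' with h' | rfl | h'
      · exact absurd h (hne _ _ _ _ h')
      · exact ⟨rfl, (hn n).2.2.2.2.2.1 _ _ h⟩
      · exact absurd h.symm (hne _ _ _ _ h')
    · rintro ⟨rfl, h⟩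
      rw [(hn n).2.2.2.1 _ _ h]

end

theorem st8_chart_eq {X : Type u} {f h : Chart X} (ht : ∀ x, ∃ y, (x, y) ∈ f.rel)
    (hs : f.rel ⊆ h.rel) : h = f := by
  have : h.rel = f.rel := by
    refine Subset.antisymm ?_ hs
    rintro ⟨x, y⟩ hxy
    obtain ⟨z, hz⟩ := ht x
    rwa [h.functional hxy (hs hz)]
  cases f; cases h; simp_all

/-- block numbering -/
theorem st8_blocks {X : Type u} [Countable X] (Pω : Set (Set X)) (hpart : Setoid.IsPartition Pω)
    (hfin : ∀ B ∈ Pω, B.Finite) :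
    ∃ k : X → ℕ, (∀ n, {x | k x = n}.Finite) ∧
      ∀ f ∈ PStab Pω, ∀ x y, (x, y) ∈ f.rel → k y = k x := by
  obtain ⟨enc, henc⟩ := exists_injective_nat X
  choose B hB hBu using hpart.2
  simp only at hB hBu
  have hBe : ∀ b ∈ Pω, ∀ x ∈ b, b = B x := fun b hb x hx => hBu x b ⟨hb, hx⟩
  let rep : Set X → ℕ := fun b => sInf (Set.image enc b)
  have hrep : ∀ x, ∃ z ∈ B x, enc z = rep (B x) := fun x =>
    Nat.sInf_mem (s := Set.image enc (B x)) ⟨_, x, (hB x).2, rfl⟩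
  refine ⟨fun x => rep (B x), fun n => ?_, fun f hf x y hxy => ?_⟩
  · rcases Set.eq_empty_or_nonempty {x | rep (B x) = n} with h | ⟨x, hx⟩
    · rw [h]; exact finite_empty
    · refine (hfin (B x) (hB x).1).subset fun y hy => ?_
      simp only [mem_setOf_eq] at hx hy
      obtain ⟨z, hz, hz'⟩ := hrep x
      obtain ⟨w, hw, hw'⟩ := hrep y
      have : z = w := henc (by rw [hz', hw', hx, hy])
      subst this
      rw [hBe _ (hB x).1 z hz, ← hBe _ (hB y).1 z hw]
      exact (hB y).2
  · have : y ∈ B x := by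
      rw [← hf.2 (B x) (hB x).1]; exact ⟨x, (hB x).2, hxy⟩
    simp only [← hBe _ (hB x).1 y this]

/-- an enumeration compatible with the block numbering -/
theorem st8_enum {X : Type u} [Countable X] (k : X → ℕ) (hk : ∀ n, {x | k x = n}.Finite) :
    ∃ e : X → ℕ, Function.Injective e ∧ ∀ x y, e y ≤ e x → k y ≤ k x := by
  obtain ⟨enc, henc⟩ := exists_injective_nat X
  have : ∀ n, ∃ M, ∀ x, k x = n → enc x ≤ M := fun n => by
    obtain ⟨M, hM⟩ := ((hk n).image enc).bddAbove
    exact ⟨M, fun x hx => hM ⟨x, hx, rfl⟩⟩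
  choose M hM using this
  have key : ∀ x y, k x < k y →
      ∑ j ∈ Finset.range (k x), (M j + 1) + enc x < ∑ j ∈ Finset.range (k y), (M j + 1) + enc y := by
    intro x y h
    have h1 := Finset.sum_le_sum_of_subset (f := fun j => M j + 1)
      (Finset.range_subset_range.2 (Nat.succ_le_of_lt h))
    rw [Nat.succ_eq_add_one, Finset.sum_range_succ] at h1
    have := hM (k x) x rfl
    omega
  refine ⟨fun x => ∑ j ∈ Finset.range (k x), (M j + 1) + enc x, fun x y h => ?_, fun x y h => ?_⟩
  · simp only at h
    rcases lt_trichotomy (k x) (k y) with h' | h' | h'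
    · have := key _ _ h'; omega
    · rw [h'] at h; exact henc (by omega)
    · have := key _ _ h'; omega
  · by_contra hc
    have := key x y (by omega)
    simp only at h
    omega

/-- analogue of Bergman–Shelah Lemma 12: under the stated hypotheses
on the sequence `α`, the unbounded sequence of positive integers `N`, the sets
`D i` and the subsemigroup `S` of `I_X`, we get `PStab 𝒫_ω ≼ S` for the
ℵ₀-unbounded partition `𝒫_ω`. -/
theorem stmt8 {X : Type u} [Countable X] [Infinite X] (S : Set (Chart X))
    (hS : IsSubsemigroup S)
    (Pω : Set (Set X)) (hpart : Setoid.IsPartition Pω)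
    (hfin : ∀ B ∈ Pω, B.Finite) (hunb : ∀ n : ℕ, ∃ B ∈ Pω, n ≤ B.ncard)
    (α : ℕ → X) (hα : Function.Injective α)
    (N : ℕ → ℕ) (hNpos : ∀ i, 0 < N i) (hNunb : ∀ m : ℕ, ∃ i, m ≤ N i)
    (D : (i : ℕ) → Set (Fin i → X)) (hne : ∀ i, (D i).Nonempty)
    (h1 : ∀ (i : ℕ) (β : Fin (i + 1) → X), β ∈ D (i + 1) → Fin.init β ∈ D i)
    (h2 : ∀ (i : ℕ) (β : Fin i → X), β ∈ D i →
      (N i : Cardinal) ≤ #↥{b : X | Fin.snoc β b ∈ D (i + 1)})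
    (h3 : ∀ β : ℕ → X, (∀ i : ℕ, (fun j : Fin i => β j.1) ∈ D i) →
      ∃ g ∈ S, ∃ g' ∈ S, ∀ i : ℕ, (α i, β i) ∈ g.rel ∧ (β i, α i) ∈ g'.rel) :
    BSleq (PStab Pω) S := by
  classical
  obtain ⟨k, hkfin, hkst⟩ := st8_blocks Pω hpart hfin
  obtain ⟨e, he, hek⟩ := st8_enum k hkfin
  have hs : ∀ (i : ℕ) (β : ℕ → X), St8Pre D i β →
      ∃ b, St8Pre D (i+1) (Function.update β i b) := by
    intro i β hb
    have h := h2 i _ hb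
    have hne' : #↥{b : X | Fin.snoc (fun j : Fin i => β j.1) b ∈ D (i + 1)} ≠ 0 := by
      intro h0
      rw [h0] at h
      have := hNpos i
      have h' : N i ≤ 0 := by exact_mod_cast h
      omega
    obtain ⟨b, hb⟩ := Cardinal.mk_ne_zero_iff.1 hne'
    refine ⟨b, ?_⟩
    simp only [mem_setOf_eq] at hb
    rw [st8_snoc] at hb
    exact hb
  have hext := st8_ext D h1 hs
  obtain ⟨β0, h0, -⟩ := hext 0 α (by
    obtain ⟨z, hz⟩ := hne 0
    unfold St8Pre
    convert hz)
  let F := {f : X → X // Function.Injective f ∧ ∀ x, k (f x) = k x}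
  let r : ℕ → Setoid F := fun n =>
    { r := fun f f' => ∀ x, e x ≤ n → ∀ y, k y ≤ k x → f.1 y = f'.1 y
      iseqv := ⟨fun _ _ _ _ _ => rfl, fun h x hx y hy => (h x hx y hy).symm,
        fun h h' x hx y hy => (h x hx y hy).trans (h' x hx y hy)⟩ }
  have hrdef : ∀ n f f', r n f f' ↔ ∀ x, e x ≤ n → ∀ y, k y ≤ k x → f.1 y = f'.1 y :=
    fun _ _ _ => Iff.rfl
  have hrx : ∀ x f f', r (e x) f f' ↔ ∀ y, k y ≤ k x → f.1 y = f'.1 y := by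
    intro x f f'
    rw [hrdef]
    exact ⟨fun h => h x le_rfl, fun h z hz y hy => h y (hy.trans (hek _ _ hz))⟩
  have hkle : ∀ n, {y | k y ≤ n}.Finite := fun n => by
    have := (Set.finite_Iic n).biUnion (fun m _ => hkfin m)
    exact this.subset fun y hy => mem_biUnion (show k y ∈ Iic n from hy) rfl
  have hrfin : ∀ n, Finite (Quotient (r n)) := by
    intro n
    let T : Set X := {y | ∃ x, e x ≤ n ∧ k y ≤ k x}
    have hT : T.Finite := by
      have h1 : {x | e x ≤ n}.Finite := (Set.finite_Iic n).preimage he.injOn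
      refine (h1.biUnion (fun x _ => hkle (k x))).subset ?_
      rintro y ⟨x, hx, hy⟩
      exact mem_biUnion (show x ∈ {x | e x ≤ n} from hx) hy
    have := hT.to_subtype
    have : ∀ m, Finite {z | k z = m} := fun m => (hkfin m).to_subtype
    let Φ : Quotient (r n) → (y : T) → {z | k z = k y.1} := fun q y => ⟨q.out.1 y.1, q.out.2.2 y.1⟩
    refine Finite.of_injective Φ fun q q' h => ?_
    rw [← Quotient.out_eq q, ← Quotient.out_eq q']
    refine Quotient.sound ?_
    intro x hx y hy
    exact congrArg Subtype.val (congrFun h ⟨y, x, hx, hy⟩)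
  obtain ⟨ι, β, hβ, hιβ⟩ := st8_tree D N hNunb h2 hext β0 h0 r hrfin
    (fun n f f' h x hx y hy => h x (by omega) y hy)
  have hnode : ∀ f f' x x', β f (ι (e x)) = β f' (ι (e x')) ↔
      x = x' ∧ ∀ y, k y ≤ k x → f.1 y = f'.1 y := by
    intro f f' x x'
    rw [hιβ, hrx, he.eq_iff]
  let f0 : F := ⟨id, Function.injective_id, fun _ => rfl⟩
  have hι : Function.Injective ι := by
    intro n n' h
    exact ((hιβ f0 f0 n n').1 (by rw [h])).1
  let u : Chart X :=
    { rel := {p | p.2 = α (ι (e p.1))}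
      functional := by
        intro x y y' h h'
        simp only [mem_setOf_eq] at h h'
        rw [h, h']
      injective := by
        intro x x' y h h'
        simp only [mem_setOf_eq] at h h'
        exact he (hι (hα (h.symm.trans h'))) }
  let w : Chart X :=
    { rel := {p | ∃ (f : F) (x : X), p.1 = β f (ι (e x)) ∧ p.2 = β f (ι (e (f.1 x)))}
      functional := by
        rintro _ _ _ ⟨f, x, hx, hy⟩ ⟨f', x', hx', hy'⟩
        simp only at hx hy hx' hy'
        obtain ⟨rfl, hf⟩ := (hnode _ _ _ _).1 (hx.symm.trans hx')
        rw [hy, hy', hnode]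
        exact ⟨hf x le_rfl, fun y h => hf y (by rwa [f.2.2] at h)⟩
      injective := by
        rintro _ _ _ ⟨f, x, hx, hy⟩ ⟨f', x', hx', hy'⟩
        simp only at hx hy hx' hy'
        obtain ⟨hxx, hf⟩ := (hnode _ _ _ _).1 (hy.symm.trans hy')
        rw [f.2.2] at hf
        rw [hx, hx', hnode]
        refine ⟨f'.2.1 ?_, hf⟩
        rw [← hxx, hf x le_rfl] }
  refine ⟨{u, w, u⁻¹}, by simp, ?_⟩
  intro c hc
  choose φ hφ using hc.1.1
  let f : F := ⟨φ, fun x x' h => c.injective (hφ x) (h ▸ hφ x'), fun x => hkst c hc _ _ (hφ x)⟩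
  obtain ⟨g, hg, g', hg', hgg⟩ := h3 (β f) (hβ f)
  have heq : u * g * w * g' * u⁻¹ = c := by
    refine st8_chart_eq hc.1.1 ?_
    rintro ⟨x, y⟩ hxy
    obtain rfl : φ x = y := c.functional (hφ x) hxy
    refine ⟨α (ι (e (φ x))), ⟨β f (ι (e (φ x))), ⟨β f (ι (e x)), ⟨α (ι (e x)), ?_, (hgg _).1⟩, ?_⟩,
      (hgg _).2⟩, ?_⟩
    · exact rfl
    · exact ⟨f, x, rfl, rfl⟩
    · exact rfl
  rw [← heq]
  have hu : InGen (S ∪ {u, w, u⁻¹}) u := .base (by simp)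
  have hw : InGen (S ∪ {u, w, u⁻¹}) w := .base (by simp)
  have hu' : InGen (S ∪ {u, w, u⁻¹}) u⁻¹ := .base (by simp)
  exact .mul (.mul (.mul (.mul hu (.base (.inl hg))) hw) (.base (.inl hg'))) hu'
end

section
/- Let X be a countably infinite set and S a subsemigroup of I_X. Suppose there exist two disjoint sequences of distinct elements (α_i)_{i∈ω}, (β_i)_{i∈ω} ∈ X^ω such that for every sequence (γ_i)_{i∈ω} with γ_i ∈ {α_i, β_i} for each i, there exist g, g′ ∈ S such that α_i g = γ_i for all i and γ_i g′ = α_i for all i. Then PStab(𝒫_2) ≼ S. -/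
open Set Cardinal

universe u

/-- analogue of Bergman–Shelah Lemma 14: if there are two disjoint
sequences of distinct elements `α, β` such that every mixed sequence `γ` (with
`γ i ∈ {α i, β i}`) is realised by elements of `S` in both directions, then
`PStab 𝒫₂ ≼ S` for the 2-uniform partition `𝒫₂`. -/
theorem stmt9 {X : Type u} [Countable X] [Infinite X] (S : Set (Chart X))
    (hS : IsSubsemigroup S)
    (P2 : Set (Set X)) (hpart : Setoid.IsPartition P2)
    (h2 : ∀ B ∈ P2, ∃ a b : X, a ≠ b ∧ B = {a, b})
    (α β : ℕ → X) (hα : Function.Injective α) (hβ : Function.Injective β)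
    (hdisj : ∀ i j : ℕ, α i ≠ β j)
    (h : ∀ γ : ℕ → X, (∀ i, γ i = α i ∨ γ i = β i) →
      ∃ g ∈ S, ∃ g' ∈ S, ∀ i : ℕ, (α i, γ i) ∈ g.rel ∧ (γ i, α i) ∈ g'.rel) :
    BSleq (PStab P2) S := by
  classical
  obtain ⟨e, he⟩ := exists_injective_nat X
  -- partner function
  have hp : ∀ x : X, ∃ y, y ≠ x ∧ ({x, y} : Set X) ∈ P2 := by
    intro x
    obtain ⟨B, ⟨hB, hx⟩, -⟩ := hpart.2 x
    obtain ⟨a, b, hab, rfl⟩ := h2 B hB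
    rcases hx with rfl | hx
    · exact ⟨b, hab.symm, hB⟩
    · obtain rfl : x = b := hx
      exact ⟨a, hab, by rwa [Set.pair_comm]⟩
  choose p hpne hpP using hp
  have hpp : ∀ x, p (p x) = x := by
    intro x
    have h1 : ({x, p x} : Set X) = {p x, p (p x)} :=
      (hpart.2 (p x)).unique ⟨hpP x, by simp⟩ ⟨hpP (p x), by simp⟩
    have h3 : p (p x) ∈ ({x, p x} : Set X) := by rw [h1]; simp
    rcases h3 with h3 | h3
    · exact h3
    · exact absurd h3 (hpne (p x))
  obtain ⟨idx, hidx⟩ : ∃ idx : X → ℕ, ∀ x, idx x =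
      2 * min (e x) (e (p x)) + if e x < e (p x) then 0 else 1 := ⟨_, fun _ => rfl⟩
  have hene : ∀ x, e x ≠ e (p x) := fun x hx => hpne x (he hx).symm
  have hhalf : ∀ x y, idx x / 2 = idx y / 2 → y = x ∨ y = p x := by
    intro x y hxy
    have h1 : min (e x) (e (p x)) = min (e y) (e (p y)) := by
      rw [hidx, hidx] at hxy
      split_ifs at hxy <;> omega
    have h3 : e x = e y ∨ e x = e (p y) ∨ e (p x) = e y ∨ e (p x) = e (p y) := by omega
    rcases h3 with h3 | h3 | h3 | h3
    · exact Or.inl (he h3).symm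
    · right; rw [he h3, hpp]
    · exact Or.inr (he h3).symm
    · left; rw [← hpp x, he h3, hpp]
  have hidxp : ∀ x, ∃ n, (idx x = 2 * n ∧ idx (p x) = 2 * n + 1) ∨
      (idx x = 2 * n + 1 ∧ idx (p x) = 2 * n) := by
    intro x
    refine ⟨min (e x) (e (p x)), ?_⟩
    have := hene x
    rw [hidx, hidx, hpp]
    split_ifs <;> omega
  have hinj : Function.Injective idx := by
    intro x y hxy
    rcases hhalf x y (by rw [hxy]) with h1 | h1
    · exact h1.symm
    · obtain ⟨n, hn⟩ := hidxp x
      rw [← h1] at hn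
      omega
  let u : Chart X :=
    { rel := {q | q.2 = α (idx q.1)}
      functional := by
        intro x y y' h1 h3
        exact Eq.trans h1 (Eq.symm h3)
      injective := by
        intro x x' y h1 h3
        exact hinj (hα (Eq.trans (Eq.symm h1) h3)) }
  let v : Chart X :=
    { rel := {q | ∃ n, (q.1 = α (2*n) ∧ q.2 = α (2*n)) ∨ (q.1 = β (2*n+1) ∧ q.2 = β (2*n+1)) ∨
        (q.1 = β (2*n) ∧ q.2 = α (2*n+1)) ∨ (q.1 = α (2*n+1) ∧ q.2 = β (2*n))}
      functional := by
        rintro x y y' ⟨n, hn⟩ ⟨m, hm⟩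
        simp only at hn hm
        have := @hα (2*n) (2*m)
        have := @hα (2*n) (2*m+1)
        have := @hα (2*n+1) (2*m)
        have := @hα (2*n+1) (2*m+1)
        have := @hβ (2*n) (2*m)
        have := @hβ (2*n) (2*m+1)
        have := @hβ (2*n+1) (2*m)
        have := @hβ (2*n+1) (2*m+1)
        rcases hn with hn | hn | hn | hn <;> rcases hm with hm | hm | hm | hm <;> grind
      injective := by
        rintro y y' x ⟨n, hn⟩ ⟨m, hm⟩
        simp only at hn hm
        have := @hα (2*n) (2*m)
        have := @hα (2*n) (2*m+1)
        have := @hα (2*n+1) (2*m)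
        have := @hα (2*n+1) (2*m+1)
        have := @hβ (2*n) (2*m)
        have := @hβ (2*n) (2*m+1)
        have := @hβ (2*n+1) (2*m)
        have := @hβ (2*n+1) (2*m+1)
        rcases hn with hn | hn | hn | hn <;> rcases hm with hm | hm | hm | hm <;> grind }
  refine ⟨{u, v, u⁻¹}, by simp, ?_⟩
  rintro f ⟨⟨hf1, hf2⟩, hf3⟩
  let sw : ℕ → Prop := fun n => ∃ x, idx x / 2 = n ∧ (x, p x) ∈ f.rel
  let γ : ℕ → X := fun k => if (sw (k / 2) ↔ k % 2 = 0) then β k else α k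
  obtain ⟨g, hg, g', hg', hgg⟩ := h γ (by intro i; simp only [γ]; split_ifs <;> simp)
  have key : ∀ x y, (x, y) ∈ f.rel → (x, y) ∈ (u * g * v * g' * u⁻¹).rel := by
    intro x y hxy
    have hy : y = x ∨ y = p x := by
      have : y ∈ ({x, p x} : Set X) := by
        rw [← hf3 _ (hpP x)]
        exact ⟨x, by simp, hxy⟩
      simpa using this
    have hv : (γ (idx x), γ (idx y)) ∈ v.rel := by
      rcases hy with rfl | rfl
      · have hns : ¬ sw (idx y / 2) := by
          rintro ⟨z, hz, hzf⟩
          rcases hhalf y z hz.symm with rfl | rfl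
          · exact hpne z (f.functional hzf hxy)
          · rw [hpp] at hzf
            exact hpne y (f.injective hzf hxy)
        rcases Nat.even_or_odd' (idx y) with ⟨n, hn | hn⟩
        · refine ⟨n, Or.inl ?_⟩
          have : γ (idx y) = α (idx y) := if_neg (by simp [hns]; omega)
          rw [hn] at this ⊢
          exact ⟨this, this⟩
        · refine ⟨n, Or.inr (Or.inl ?_)⟩
          have : γ (idx y) = β (idx y) := if_pos (by simp [hns]; omega)
          rw [hn] at this ⊢
          exact ⟨this, this⟩
      · have hs : ∀ k, k / 2 = idx x / 2 → sw (k / 2) := fun k hk => ⟨x, hk.symm, hxy⟩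
        obtain ⟨n, ⟨h1, h3⟩ | ⟨h1, h3⟩⟩ := hidxp x
        · have e1 : γ (idx x) = β (idx x) := if_pos (by simp [hs (idx x) rfl]; omega)
          have e2 : γ (idx (p x)) = α (idx (p x)) :=
            if_neg (by simp [hs (idx (p x)) (by omega)]; omega)
          exact ⟨n, Or.inr (Or.inr (Or.inl ⟨e1.trans (by rw [h1]), e2.trans (by rw [h3])⟩))⟩
        · have e1 : γ (idx x) = α (idx x) := if_neg (by simp [hs (idx x) rfl]; omega)
          have e2 : γ (idx (p x)) = β (idx (p x)) :=
            if_pos (by simp [hs (idx (p x)) (by omega)]; omega)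
          exact ⟨n, Or.inr (Or.inr (Or.inr ⟨e1.trans (by rw [h1]), e2.trans (by rw [h3])⟩))⟩
    exact ⟨α (idx y), ⟨γ (idx y), ⟨γ (idx x), ⟨α (idx x), rfl, (hgg _).1⟩, hv⟩, (hgg _).2⟩, rfl⟩
  have hfe : f = u * g * v * g' * u⁻¹ := by
    have hrel : f.rel = (u * g * v * g' * u⁻¹).rel := by
      ext ⟨x, y⟩
      refine ⟨key x y, fun hxy => ?_⟩
      obtain ⟨z, hz⟩ := hf1 x
      rwa [(u * g * v * g' * u⁻¹).functional hxy (key x z hz)]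
    generalize u * g * v * g' * u⁻¹ = w at hrel
    cases f; cases w
    simpa using hrel
  rw [hfe]
  refine InGen.mul (InGen.mul (InGen.mul (InGen.mul ?_ ?_) ?_) ?_) ?_
  · exact InGen.base (Or.inr (by simp))
  · exact InGen.base (Or.inl hg)
  · exact InGen.base (Or.inr (by simp))
  · exact InGen.base (Or.inl hg')
  · exact InGen.base (Or.inr (by simp))
end

section
/- Let T be a rooted tree on a countably infinite vertex set X and let P be the set of all rooted paths of T. Then 𝒮(T) ≈ ∅ (the empty subset of I_X) if and only if P is countable. -/
open Set Cardinal

universe u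

/-- Stages of the generation process. -/
def genStage {X : Type u} (S : Set (Chart X)) : ℕ → Set (Chart X)
  | 0 => S
  | n + 1 => genStage S n ∪ Set.image2 (fun f g => f * g) (genStage S n) (genStage S n)

theorem genStage_countable {X : Type u} {S : Set (Chart X)} (hS : S.Countable) (n : ℕ) :
    (genStage S n).Countable := by
  induction n with
  | zero => exact hS
  | succ n ih => exact ih.union (ih.image2 ih _)

theorem genStage_mono {X : Type u} (S : Set (Chart X)) : Monotone (genStage S) :=
  monotone_nat_of_le_succ fun _ => Set.subset_union_left

theorem Sgen_countable {X : Type u} {S : Set (Chart X)} (hS : S.Countable) :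
    (Sgen S).Countable := by
  refine (Set.countable_iUnion (genStage_countable hS)).mono ?_
  intro f hf
  have hf' : InGen S f := hf
  clear hf
  rw [Set.mem_iUnion]
  induction hf' with
  | base h => exact ⟨0, h⟩
  | mul _ _ ih1 ih2 =>
    obtain ⟨m, hm⟩ := ih1
    obtain ⟨n, hn⟩ := ih2
    refine ⟨max m n + 1, Or.inr ?_⟩
    exact ⟨_, genStage_mono S (le_max_left m n) hm, _, genStage_mono S (le_max_right m n) hn, rfl⟩

theorem eq_of_anc_level {X : Type u} (T : RTree X) (hT : T.verts = Set.univ) {x y : X}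
    (h : T.anc x y) (hl : T.level x = T.level y) : x = y := by
  have hlev : ∀ z, T.par^[T.level z] z = T.root := fun z =>
    Nat.sInf_mem (s := {n : ℕ | T.par^[n] z = T.root})
      (T.par_reaches z (hT ▸ Set.mem_univ z))
  have hmin : ∀ z n, T.par^[n] z = T.root → T.level z ≤ n := fun z n hn =>
    Nat.sInf_le (s := {n : ℕ | T.par^[n] z = T.root}) hn
  obtain ⟨n, rfl⟩ := h
  rcases Nat.eq_zero_or_pos n with rfl | hn
  · rfl
  have hx := hlev (T.par^[n] y)
  have hy := hlev y
  rw [hl] at hx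
  have hk : T.level y = 0 := by
    by_cases hnk : n ≤ T.level y
    · have := hmin (T.par^[n] y) (T.level y - n) (by
        rw [← Function.iterate_add_apply, Nat.sub_add_cancel hnk, hy])
      omega
    · have h1 : T.par^[n] y = T.root := by
        have : n = (n - T.level y) + T.level y := by omega
        rw [this, Function.iterate_add_apply, hy, Function.iterate_fixed T.par_root]
      have := hmin (T.par^[n] y) 0 h1
      omega
  rw [hk] at hx hy
  exact hx.trans hy.symm

theorem path_rel_sub {X : Type u} (T : RTree X) (hT : T.verts = Set.univ) {f g : Chart X}
    (hf : f ∈ pathSg T) (hg : g ∈ pathSg T) (hd : f.dom = g.dom) (hr : f.ran = g.ran) :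
    f.rel ⊆ g.rel := by
  rintro ⟨x, y⟩ hxy
  have hx : x ∈ g.dom := hd ▸ ⟨y, hxy⟩
  obtain ⟨y', hy'⟩ := hx
  have hy : y ∈ g.ran := hr ▸ ⟨x, hxy⟩
  obtain ⟨-, ⟨Q, hQ, rfl⟩, hl⟩ := hg
  have e : T.level y = T.level y' := (hf.2.2 x y hxy).trans (hl x y' hy').symm
  have : y = y' := by
    rcases hQ.2.2.2 y hy y' ⟨x, hy'⟩ with h | h
    · exact eq_of_anc_level T hT h e
    · exact (eq_of_anc_level T hT h e.symm).symm
  exact this ▸ hy'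

/-- The partial identity on a set. -/
def idChart {X : Type u} (P : Set X) : Chart X where
  rel := {p | p.1 ∈ P ∧ p.1 = p.2}
  functional := by
    rintro x y y' ⟨_, h⟩ ⟨_, h'⟩
    exact h.symm.trans h'
  injective := by
    rintro x y y' ⟨_, h⟩ ⟨_, h'⟩
    exact h.trans h'.symm

theorem idChart_dom {X : Type u} (P : Set X) : (idChart P).dom = P := by
  ext x
  exact ⟨fun ⟨_, h, _⟩ => h, fun h => ⟨x, h, rfl⟩⟩

theorem idChart_ran {X : Type u} (P : Set X) : (idChart P).ran = P := by
  ext x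
  constructor
  · rintro ⟨y, h, e⟩
    have e' : y = x := e
    exact e' ▸ h
  · exact fun h => ⟨x, h, rfl⟩

/-- for a rooted tree `T` on a countably infinite vertex set `X`,
`𝒮(T) ≈ ∅` if and only if the set of rooted paths of `T` is countable. -/
theorem stmt11 {X : Type u} [Countable X] [Infinite X] (T : RTree X)
    (hT : T.verts = Set.univ) :
    BSequiv (pathSg T) (∅ : Set (Chart X)) ↔
      {P : Set X | T.IsRootedPath P}.Countable := by
  constructor
  · rintro ⟨⟨U, hU, hsub⟩, -⟩
    have hc : (pathSg T).Countable :=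
      (Sgen_countable (Set.countable_empty.union hU)).mono hsub
    refine (hc.image Chart.dom).mono ?_
    intro P hP
    refine ⟨idChart P, ⟨⟨P, hP, idChart_dom P⟩, ⟨P, hP, idChart_ran P⟩, ?_⟩, idChart_dom P⟩
    rintro x y ⟨_, e⟩
    have e' : x = y := e
    rw [e']
  · intro hP
    refine ⟨⟨pathSg T, ?_, fun f hf => InGen.base (Or.inr hf)⟩,
      ⟨∅, Set.countable_empty, Set.empty_subset _⟩⟩
    refine Set.MapsTo.countable_of_injOn (f := fun f : Chart X => (f.dom, f.ran))
      (t := {P : Set X | T.IsRootedPath P} ×ˢ {P : Set X | T.IsRootedPath P}) ?_ ?_ (hP.prod hP)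
    · rintro f ⟨⟨P, hP, h1⟩, ⟨Q, hQ, h2⟩, -⟩
      exact ⟨by simpa [h1] using hP, by simpa [h2] using hQ⟩
    · intro f hf g hg h
      obtain ⟨hd, hr⟩ := Prod.mk.inj h
      have := Set.Subset.antisymm (path_rel_sub T hT hf hg hd hr)
        (path_rel_sub T hT hg hf hd.symm hr.symm)
      cases f
      cases g
      cases this
      rfl
end

section
/- Let T and R be rooted trees and let X be the union of the vertex sets of T and R, so that 𝒮(T) and 𝒮(R) are both subsemigroups of I_X. If T contains a quasi-subtree Q such that Q and R are isomorphic as rooted trees, then 𝒮(R) ≼ 𝒮(T). -/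
open Set Cardinal

universe u

namespace RTree

variable {X : Type u}

lemma iter_root (T : RTree X) (n : ℕ) : T.par^[n] T.root = T.root := by
  induction n with
  | zero => rfl
  | succ n ih => rw [Function.iterate_succ_apply, T.par_root, ih]

lemma iter_mem (T : RTree X) {x : X} (hx : x ∈ T.verts) (n : ℕ) : T.par^[n] x ∈ T.verts := by
  induction n with
  | zero => exact hx
  | succ n ih => rw [Function.iterate_succ_apply']; exact T.par_mem _ ih

lemma iter_level (T : RTree X) {x : X} (hx : x ∈ T.verts) : T.par^[T.level x] x = T.root :=
  Nat.sInf_mem (s := {n : ℕ | T.par^[n] x = T.root}) (T.par_reaches x hx)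

lemma level_le (T : RTree X) {x : X} {n : ℕ} (h : T.par^[n] x = T.root) : T.level x ≤ n :=
  Nat.sInf_le (s := {n : ℕ | T.par^[n] x = T.root}) h

lemma level_iter (T : RTree X) {x : X} (hx : x ∈ T.verts) (n : ℕ) :
    T.level (T.par^[n] x) = T.level x - n := by
  apply le_antisymm
  · apply T.level_le
    rw [← Function.iterate_add_apply]
    have h : T.level x - n + n = (T.level x - n + n - T.level x) + T.level x := by omega
    rw [h, Function.iterate_add_apply, T.iter_level hx, T.iter_root]
  · have h := T.iter_level (T.iter_mem hx n)
    rw [← Function.iterate_add_apply] at h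
    have := T.level_le h
    omega

lemma anc_eq (T : RTree X) {x y : X} (hy : y ∈ T.verts) (h : T.anc x y)
    (hl : T.level x = T.level y) : x = y := by
  obtain ⟨n, rfl⟩ := h
  rw [T.level_iter hy] at hl
  rcases Nat.eq_zero_or_pos n with rfl | hn
  · rfl
  · have h0 : T.level y = 0 := by omega
    have h1 := T.iter_level hy
    rw [h0] at h1
    have h2 : y = T.root := h1
    rw [h2, T.iter_root]

lemma IsRootedPath.eq_of_level {T : RTree X} {P : Set X} (hP : T.IsRootedPath P) {x y : X}
    (hx : x ∈ P) (hy : y ∈ P) (hl : T.level x = T.level y) : x = y := by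
  rcases hP.2.2.2 x hx y hy with h | h
  · exact T.anc_eq (hP.2.1 hy) h hl
  · exact (T.anc_eq (hP.2.1 hx) h hl.symm).symm

lemma IsRootedPath.iter {T : RTree X} {P : Set X} (hP : T.IsRootedPath P) {x : X}
    (hx : x ∈ P) (n : ℕ) : T.par^[n] x ∈ P := by
  induction n with
  | zero => exact hx
  | succ n ih => rw [Function.iterate_succ_apply']; exact hP.2.2.1 _ ih

/-- The ancestor closure. -/
def clos (T : RTree X) (A : Set X) : Set X := {x | ∃ a ∈ A, T.anc x a}

lemma anc_trans (T : RTree X) {x y z : X} (h : T.anc x y) (h' : T.anc y z) : T.anc x z := by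
  obtain ⟨n, rfl⟩ := h
  obtain ⟨m, rfl⟩ := h'
  exact ⟨n + m, Function.iterate_add_apply _ _ _ _⟩

lemma anc_linear (T : RTree X) {x y z : X} (h : T.anc x z) (h' : T.anc y z) :
    T.anc x y ∨ T.anc y x := by
  obtain ⟨n, rfl⟩ := h
  obtain ⟨m, rfl⟩ := h'
  rcases le_total n m with h | h
  · right
    exact ⟨m - n, by rw [← Function.iterate_add_apply, Nat.sub_add_cancel h]⟩
  · left
    exact ⟨n - m, by rw [← Function.iterate_add_apply, Nat.sub_add_cancel h]⟩

lemma clos_path (T : RTree X) {A : Set X} (hne : A.Nonempty) (hA : A ⊆ T.verts)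
    (hl : ∀ x ∈ A, ∀ y ∈ A, T.anc x y ∨ T.anc y x) : T.IsRootedPath (T.clos A) := by
  refine ⟨?_, ?_, ?_, ?_⟩
  · obtain ⟨a, ha⟩ := hne
    exact ⟨a, a, ha, 0, rfl⟩
  · rintro x ⟨a, ha, n, rfl⟩
    exact T.iter_mem (hA ha) n
  · rintro x ⟨a, ha, h⟩
    exact ⟨a, ha, T.anc_trans ⟨1, rfl⟩ h⟩
  · rintro x ⟨a, ha, h⟩ y ⟨b, hb, h'⟩
    rcases hl a ha b hb with k | k
    · exact T.anc_linear (T.anc_trans h k) h'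
    · exact T.anc_linear h (T.anc_trans h' k)

end RTree

/-- if `T` and `R` are rooted trees whose vertex sets have union
`X`, and `T` contains a quasi-subtree `Q` isomorphic to `R` as a rooted tree,
then `𝒮(R) ≼ 𝒮(T)`. -/
theorem stmt12 {X : Type u} (T R : RTree X)
    (hunion : T.verts ∪ R.verts = Set.univ)
    (hQ : ∃ Q : RTree X, IsQuasiSubtree Q T ∧ RTreeIso Q R) :
    BSleq (pathSg R) (pathSg T) := by
  obtain ⟨Q, ⟨hQT, hanc, hlev⟩, φ, hφ, hroot, hpar⟩ := hQ
  have hiter : ∀ x ∈ Q.verts, ∀ n, φ (Q.par^[n] x) = R.par^[n] (φ x) := by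
    intro x hx n
    induction n with
    | zero => rfl
    | succ n ih =>
      rw [Function.iterate_succ_apply', Function.iterate_succ_apply',
        hpar _ (Q.iter_mem hx n), ih]
  have hlevel : ∀ x ∈ Q.verts, R.level (φ x) = Q.level x := by
    intro x hx
    unfold RTree.level
    congr 1
    ext n
    simp only [mem_setOf_eq]
    rw [← hiter x hx, ← hroot]
    exact ⟨fun h => hφ.injOn (Q.iter_mem hx n) Q.root_mem h, fun h => by rw [h]⟩
  have hancR : ∀ x ∈ Q.verts, ∀ y ∈ Q.verts, R.anc (φ x) (φ y) → T.anc x y := by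
    rintro x hx y hy ⟨n, hn⟩
    rw [← hiter y hy] at hn
    exact (hanc x hx y hy).1 ⟨n, hφ.injOn (Q.iter_mem hy n) hx hn⟩
  -- pulled back paths
  have hpath : ∀ P, R.IsRootedPath P → T.IsRootedPath (T.clos {x | x ∈ Q.verts ∧ φ x ∈ P}) := by
    intro P hP
    apply T.clos_path
    · obtain ⟨p, hp⟩ := hP.1
      obtain ⟨x, hx, rfl⟩ := hφ.surjOn (hP.2.1 hp)
      exact ⟨x, hx, hp⟩
    · exact fun x hx => hQT hx.1
    · rintro x ⟨hx, hxP⟩ y ⟨hy, hyP⟩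
      exact (hP.2.2.2 _ hxP _ hyP).imp (hancR x hx y hy) (hancR y hy x hx)
  have hback : ∀ P, R.IsRootedPath P → ∀ x ∈ Q.verts,
      x ∈ T.clos {x | x ∈ Q.verts ∧ φ x ∈ P} → φ x ∈ P := by
    rintro P hP x hx ⟨a, ⟨ha, haP⟩, h⟩
    obtain ⟨n, rfl⟩ := (hanc x hx a ha).2 h
    rw [hiter a ha]
    exact hP.iter haP n
  let c : Chart X :=
    { rel := {p | p.2 ∈ Q.verts ∧ φ p.2 = p.1}
      functional := by
        rintro x y y' ⟨h1, h2⟩ ⟨h3, h4⟩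
        exact hφ.injOn h1 h3 (h2.trans h4.symm)
      injective := by
        rintro x x' y ⟨h1, h2⟩ ⟨h3, h4⟩
        exact h2.symm.trans h4 }
  refine ⟨{c, c⁻¹}, by simp, ?_⟩
  rintro f ⟨⟨P, hP, hdom⟩, ⟨P', hP', hran⟩, hf⟩
  have hA := hpath P hP
  have hB := hpath P' hP'
  let g : Chart X :=
    { rel := {p | p.1 ∈ T.clos {x | x ∈ Q.verts ∧ φ x ∈ P} ∧
        p.2 ∈ T.clos {x | x ∈ Q.verts ∧ φ x ∈ P'} ∧ T.level p.2 = T.level p.1}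
      functional := by
        rintro x y y' ⟨_, h2, h3⟩ ⟨_, h5, h6⟩
        exact hB.eq_of_level h2 h5 (h3.trans h6.symm)
      injective := by
        rintro x x' y ⟨h1, _, h3⟩ ⟨h4, _, h6⟩
        exact hA.eq_of_level h1 h4 (h3.symm.trans h6) }
  have hlev2 : ∀ x ∈ Q.verts, ∀ y ∈ Q.verts,
      (R.level (φ y) = R.level (φ x) ↔ T.level y = T.level x) := by
    intro x hx y hy
    rw [hlevel x hx, hlevel y hy]
    exact hlev y hy x hx
  have hg : g ∈ pathSg T := by
    refine ⟨⟨_, hA, ?_⟩, ⟨_, hB, ?_⟩, fun x y h => h.2.2⟩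
    · ext x
      constructor
      · rintro ⟨y, h⟩
        exact h.1
      · intro hx
        obtain ⟨a, ⟨ha, haP⟩, n, rfl⟩ := id hx
        have h1 := haP
        rw [← hdom] at h1
        obtain ⟨q, hq⟩ := h1
        have hqP : q ∈ P' := by rw [← hran]; exact ⟨_, hq⟩
        obtain ⟨b, hb, rfl⟩ := hφ.surjOn (hP'.2.1 hqP)
        have hl := (hlev2 a ha b hb).1 (hf _ _ hq)
        refine ⟨T.par^[n] b, hx, ⟨b, ⟨hb, hqP⟩, n, rfl⟩, ?_⟩
        change T.level (T.par^[n] b) = T.level (T.par^[n] a)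
        rw [T.level_iter (hQT hb), T.level_iter (hQT ha), hl]
    · ext y
      constructor
      · rintro ⟨x, h⟩
        exact h.2.1
      · intro hy
        obtain ⟨b, ⟨hb, hbP⟩, n, rfl⟩ := id hy
        have h1 := hbP
        rw [← hran] at h1
        obtain ⟨q, hq⟩ := h1
        have hqP : q ∈ P := by rw [← hdom]; exact ⟨_, hq⟩
        obtain ⟨a, ha, rfl⟩ := hφ.surjOn (hP.2.1 hqP)
        have hl := (hlev2 a ha b hb).1 (hf _ _ hq)
        refine ⟨T.par^[n] a, ⟨a, ⟨ha, hqP⟩, n, rfl⟩, hy, ?_⟩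
        change T.level (T.par^[n] b) = T.level (T.par^[n] a)
        rw [T.level_iter (hQT hb), T.level_iter (hQT ha), hl]
  have hrel : f.rel = (c * (g * c⁻¹)).rel := by
    ext ⟨p, q⟩
    constructor
    · intro h
      have hp : p ∈ P := by rw [← hdom]; exact ⟨_, h⟩
      have hq : q ∈ P' := by rw [← hran]; exact ⟨_, h⟩
      obtain ⟨a, ha, rfl⟩ := hφ.surjOn (hP.2.1 hp)
      obtain ⟨b, hb, rfl⟩ := hφ.surjOn (hP'.2.1 hq)
      exact ⟨a, ⟨ha, rfl⟩, b, ⟨⟨a, ⟨ha, hp⟩, 0, rfl⟩, ⟨b, ⟨hb, hq⟩, 0, rfl⟩,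
        (hlev2 a ha b hb).1 (hf _ _ h)⟩, ⟨hb, rfl⟩⟩
    · rintro ⟨a, ⟨ha, h1⟩, b, ⟨h2, h3, h4⟩, ⟨hb, h5⟩⟩
      dsimp only at ha h1 h2 h3 h4 hb h5
      subst h1 h5
      have hp := hback P hP a ha h2
      have hq := hback P' hP' b hb h3
      have h6 := hp
      rw [← hdom] at h6
      obtain ⟨q, h⟩ := h6
      have hq' : q ∈ P' := by rw [← hran]; exact ⟨_, h⟩
      have : q = φ b := hP'.eq_of_level hq' hq ((hf _ _ h).trans ((hlev2 a ha b hb).2 h4).symm)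
      rw [← this]
      exact h
  have hfe : f = c * (g * c⁻¹) := by
    cases f
    cases hh : c * (g * c⁻¹)
    rw [hh] at hrel
    dsimp only at hrel
    subst hrel
    rfl
  rw [hfe]
  exact InGen.mul (InGen.base (by simp)) (InGen.mul (InGen.base (Or.inl hg)) (InGen.base (by simp)))
end
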